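/- For every integer n ≥ 2 (with the convention Z_0(x,y) = 1), the alternative adjacent-boundary doubly-refined ASM generating function satisfies the recursion: (z1−1)(z2−1)·Zbaradj_n(x,y;z1,z2)·Z_{n−2}(x,y) = y·z1·z2·Zbaradj_{n−1}(x,y;z1,z2)·Z_{n−1}(x,y) + ((z1−1)(z2−1)−y·z1·z2)·Z_{n−1}(x,y;z1)·Z_{n−1}(x,y;z2) + (z1−1)(z2−1)·(x·z1·z2)^{n−1}·Z_{n−1}(x,y)·Z_{n−2}(x,y), as an identity of polynomials in ℤ[x,y,z1,z2]. -/

import Mathlib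

open Finset

/-- The `n × n` integer matrix encoded by `e`, with entries in `{-1, 0, 1}`. -/
def asmMat {n : ℕ} (e : Fin n → Fin n → Fin 3) : Fin n → Fin n → ℤ :=
  fun i j => (e i j : ℤ) - 1

/-- `A` is an alternating sign matrix: all entries lie in `{-1, 0, 1}`, every
partial row sum and every partial column sum is `0` or `1` (equivalently, the
nonzero entries of each row and of each column alternate in sign), and every
complete row sum and column sum is `1`. -/
def IsASM {n : ℕ} (A : Fin n → Fin n → ℤ) : Prop :=
  (∀ i j, A i j = -1 ∨ A i j = 0 ∨ A i j = 1) ∧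
  (∀ (i j : Fin n), (∑ j' ∈ univ.filter (fun j' : Fin n => j' ≤ j), A i j') = 0 ∨
    (∑ j' ∈ univ.filter (fun j' : Fin n => j' ≤ j), A i j') = 1) ∧
  (∀ (i j : Fin n), (∑ i' ∈ univ.filter (fun i' : Fin n => i' ≤ i), A i' j) = 0 ∨
    (∑ i' ∈ univ.filter (fun i' : Fin n => i' ≤ i), A i' j) = 1) ∧
  (∀ i : Fin n, (∑ j, A i j) = 1) ∧
  (∀ j : Fin n, (∑ i, A i j) = 1)

/-- `ν(A)`, the number of generalized inversions of `A`. -/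
def nuASM {n : ℕ} (A : Fin n → Fin n → ℤ) : ℕ :=
  (∑ i : Fin n, ∑ i' : Fin n, ∑ j : Fin n, ∑ j' : Fin n,
      if i < i' ∧ j' ≤ j then A i j * A i' j' else 0).toNat

/-- `μ(A)`, the number of entries of `A` equal to `-1`. -/
def muASM {n : ℕ} (A : Fin n → Fin n → ℤ) : ℕ :=
  (univ.filter (fun p : Fin n × Fin n => A p.1 p.2 = -1)).card

/-- `ρT(A)`, the number of `0`'s to the left of the `1` in the top row of `A`. -/
def rhoT {n : ℕ} (A : Fin n → Fin n → ℤ) : ℕ :=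
  (univ.filter (fun j : Fin n =>
    A ⟨0, j.pos⟩ j = 0 ∧ ∃ j' : Fin n, j < j' ∧ A ⟨0, j.pos⟩ j' = 1)).card

/-- `ρR(A)`, the number of `0`'s below the `1` in the right-most column of `A`. -/
def rhoR {n : ℕ} (A : Fin n → Fin n → ℤ) : ℕ :=
  (univ.filter (fun i : Fin n =>
    A i ⟨n - 1, Nat.sub_lt i.pos Nat.one_pos⟩ = 0 ∧
      ∃ i' : Fin n, i' < i ∧ A i' ⟨n - 1, Nat.sub_lt i.pos Nat.one_pos⟩ = 1)).card

/-- `ρB(A)`, the number of `0`'s to the right of the `1` in the bottom row of `A`. -/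
def rhoB {n : ℕ} (A : Fin n → Fin n → ℤ) : ℕ :=
  (univ.filter (fun j : Fin n =>
    A ⟨n - 1, Nat.sub_lt j.pos Nat.one_pos⟩ j = 0 ∧
      ∃ j' : Fin n, j' < j ∧ A ⟨n - 1, Nat.sub_lt j.pos Nat.one_pos⟩ j' = 1)).card

/-- `ρL(A)`, the number of `0`'s above the `1` in the left-most column of `A`. -/
def rhoL {n : ℕ} (A : Fin n → Fin n → ℤ) : ℕ :=
  (univ.filter (fun i : Fin n =>
    A i ⟨0, i.pos⟩ = 0 ∧ ∃ i' : Fin n, i < i' ∧ A i' ⟨0, i.pos⟩ = 1)).card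

open Classical in
/-- The quadruply-refined ASM generating function
`Zqua_n(x,y;z1,z2,z3,z4) = Σ_A x^{ν(A)} y^{μ(A)} z1^{ρT(A)} z2^{ρR(A)} z3^{ρB(A)} z4^{ρL(A)}`. -/
noncomputable def Zqua (n : ℕ) {R : Type*} [CommRing R] (x y z1 z2 z3 z4 : R) : R :=
  ∑ e : Fin n → Fin n → Fin 3,
    if IsASM (asmMat e) then
      x ^ nuASM (asmMat e) * y ^ muASM (asmMat e) * z1 ^ rhoT (asmMat e) *
        z2 ^ rhoR (asmMat e) * z3 ^ rhoB (asmMat e) * z4 ^ rhoL (asmMat e)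
    else 0

/-- Adjacent-boundary doubly-refined generating function `Zadj_n(x,y;z1,z2)`. -/
noncomputable def Zadj (n : ℕ) {R : Type*} [CommRing R] (x y z1 z2 : R) : R :=
  Zqua n x y z1 1 1 z2

/-- Alternative adjacent-boundary doubly-refined generating function `Zbaradj_n(x,y;z1,z2)`. -/
noncomputable def Zbaradj (n : ℕ) {R : Type*} [CommRing R] (x y z1 z2 : R) : R :=
  Zqua n x y z1 z2 1 1

/-- Triply-refined generating function `Ztri_n(x,y;z1,z2,z3)`. -/
noncomputable def Ztri (n : ℕ) {R : Type*} [CommRing R] (x y z1 z2 z3 : R) : R :=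
  Zqua n x y z1 1 z2 z3

/-- Opposite-boundary doubly-refined generating function `Zopp_n(x,y;z1,z2)`. -/
noncomputable def Zopp (n : ℕ) {R : Type*} [CommRing R] (x y z1 z2 : R) : R :=
  Zqua n x y z1 1 z2 1

/-- Singly-refined generating function `Z_n(x,y;z)`. -/
noncomputable def Zsing (n : ℕ) {R : Type*} [CommRing R] (x y z : R) : R :=
  Zqua n x y z 1 1 1

/-- Unrefined generating function `Z_n(x,y)`.  Note `Zun 0 x y = 1`. -/
noncomputable def Zun (n : ℕ) {R : Type*} [CommRing R] (x y : R) : R :=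
  Zqua n x y 1 1 1 1

/-- The weight of a six-vertex configuration at one site, with left edge `h`, top edge `v` and
matrix entry `e`: the entry `0` has weight `a` or `b` according to whether `h = v`, the entries `1`
and `-1` have weights `c` and `d`, and inadmissible configurations have weight `0`. -/
def vtx {R : Type*} [Zero R] (a b c d : R) (h v e : ℤ) : R :=
  if h = 0 then
    if v = 0 then (if e = 0 then a else if e = 1 then c else 0)
    else if v = 1 then (if e = 0 then b else 0)
    else 0
  else if h = 1 then
    if v = 0 then (if e = 0 then b else 0)
    else if v = 1 then (if e = 0 then a else if e = -1 then d else 0)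
    else 0
  else 0

/-- The integer entry in `{-1, 0, 1}` encoded by an element of `Fin 3`. -/
def ent (x : Fin 3) : ℤ := (x : ℤ) - 1

/-- The weight of the row `r`, entered from the left with edge `h` below the vertical edges `σ`. -/
def rowWt {R : Type*} [CommRing R] {m : ℕ} (w : Fin m → ℤ → ℤ → ℤ → R) (h : ℤ)
    (σ : Fin m → ℤ) (r : Fin m → Fin 3) : R :=
  ∏ j, w j (h + ∑ j', if j' < j then ent (r j') else 0) (σ j) (ent (r j))

/-- The partition function of `k` rows of width `m` below the vertical edges `σ`, where every
row leaves with edge `1` to the right and every column leaves with edge `1` to the bottom. -/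
def part {R : Type*} [CommRing R] {k m : ℕ} (w : Fin k → Fin m → ℤ → ℤ → ℤ → R)
    (σ : Fin m → ℤ) : R :=
  ∑ e : Fin k → Fin m → Fin 3,
    if (∀ i, ∑ j, ent (e i j) = 1) ∧ (∀ j, σ j + ∑ i, ent (e i j) = 1) then
      ∏ i, ∏ j, w i j (∑ j', if j' < j then ent (e i j') else 0)
        (σ j + ∑ i', if i' < i then ent (e i' j) else 0) (ent (e i j))
    else 0

lemma sum_fin_cons {α M : Type*} [Fintype α] [AddCommMonoid M] {n : ℕ}
    (f : (Fin (n + 1) → α) → M) :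
    ∑ e, f e = ∑ a, ∑ r, f (Fin.cons a r) := by
  rw [← (Fin.consEquiv (fun _ : Fin (n + 1) => α)).sum_comp, Fintype.sum_prod_type]
  rfl

lemma part_succ {R : Type*} [CommRing R] {k m : ℕ} (w : Fin (k + 1) → Fin m → ℤ → ℤ → ℤ → R)
    (σ : Fin m → ℤ) :
    part w σ = ∑ r : Fin m → Fin 3, (if ∑ j, ent (r j) = 1 then rowWt (w 0) 0 σ r else 0) *
      part (fun i => w i.succ) (fun j => σ j + ent (r j)) := by
  unfold part rowWt
  rw [sum_fin_cons]
  refine Finset.sum_congr rfl fun r _ => ?_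
  rw [Finset.mul_sum]
  refine Finset.sum_congr rfl fun e _ => ?_
  simp only [Fin.forall_fin_succ, Fin.cons_zero, Fin.cons_succ, Fin.prod_univ_succ,
    Fin.sum_univ_succ, Fin.not_lt_zero, Fin.succ_pos, Fin.succ_lt_succ_iff, if_true, if_false,
    Finset.sum_const_zero, add_zero, zero_add, add_assoc, ite_mul, zero_mul, mul_ite, mul_zero,
    and_assoc]
  split_ifs <;> tauto

lemma rowWt_cons {R : Type*} [CommRing R] {m : ℕ} (w : Fin (m + 1) → ℤ → ℤ → ℤ → R) (h : ℤ)
    (σ : Fin (m + 1) → ℤ) (a : Fin 3) (r : Fin m → Fin 3) :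
    rowWt w h σ (Fin.cons a r) =
      w 0 h (σ 0) (ent a) * rowWt (fun j => w j.succ) (h + ent a) (fun j => σ j.succ) r := by
  unfold rowWt
  simp only [Fin.cons_zero, Fin.cons_succ, Fin.prod_univ_succ,
    Fin.sum_univ_succ, Fin.not_lt_zero, Fin.succ_pos, Fin.succ_lt_succ_iff, if_true, if_false,
    Finset.sum_const_zero, add_zero, add_assoc]

/-- The transfer matrix of two successive rows applied to a function `f` of the outgoing edges. -/
def twoRow {R : Type*} [CommRing R] {m : ℕ} (w w' : Fin m → ℤ → ℤ → ℤ → R)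
    (σ : Fin m → ℤ) (f : (Fin m → ℤ) → ℤ → ℤ → R) (h h' : ℤ) : R :=
  ∑ r : Fin m → Fin 3, ∑ r' : Fin m → Fin 3,
    rowWt w h σ r * rowWt w' h' (fun j => σ j + ent (r j)) r' *
      f (fun j => σ j + ent (r j) + ent (r' j)) (h + ∑ j, ent (r j)) (h' + ∑ j, ent (r' j))

/-- The transfer matrix of two vertically adjacent sites. -/
def twoSite {R : Type*} [CommRing R] (w w' : ℤ → ℤ → ℤ → R) (s : ℤ)
    (G : ℤ → ℤ → ℤ → R) (h h' : ℤ) : R :=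
  ∑ a : Fin 3, ∑ a' : Fin 3, w h s (ent a) * w' h' (s + ent a) (ent a') *
    G (s + ent a + ent a') (h + ent a) (h' + ent a')

lemma twoRow_succ {R : Type*} [CommRing R] {m : ℕ} (w w' : Fin (m + 1) → ℤ → ℤ → ℤ → R)
    (σ : Fin (m + 1) → ℤ) (f : (Fin (m + 1) → ℤ) → ℤ → ℤ → R) (h h' : ℤ) :
    twoRow w w' σ f h h' = twoSite (w 0) (w' 0) (σ 0)
      (fun s => twoRow (fun j => w j.succ) (fun j => w' j.succ) (fun j => σ j.succ)
        (fun ρ => f (Fin.cons s ρ))) h h' := by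
  unfold twoRow twoSite
  simp only [sum_fin_cons (α := Fin 3)]
  refine Finset.sum_congr rfl fun a _ => ?_
  rw [Finset.sum_comm]
  refine Finset.sum_congr rfl fun a' _ => ?_
  rw [Finset.mul_sum]
  refine Finset.sum_congr rfl fun r _ => ?_
  rw [Finset.mul_sum]
  refine Finset.sum_congr rfl fun r' _ => ?_
  have key : (fun j => σ j + ent ((Fin.cons a r : Fin (m + 1) → Fin 3) j) +
      ent ((Fin.cons a' r' : Fin (m + 1) → Fin 3) j)) =
      Fin.cons (σ 0 + ent a + ent a') (fun j => σ j.succ + ent (r j) + ent (r' j)) := by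
    funext j
    refine Fin.cases ?_ (fun j => ?_) j <;> simp
  rw [key]
  simp only [rowWt_cons, Fin.sum_univ_succ, Fin.cons_zero, Fin.cons_succ, add_assoc]
  ring

/-- The weights of the integrable six-vertex model with spectral parameters `u` and `v`. -/
def spec {R : Type*} [CommRing R] (τ u v : R) : ℤ → ℤ → ℤ → R :=
  vtx (u - τ ^ 2 * v) (τ * (u - v)) 1 ((1 - τ ^ 2) ^ 2 * u * v)

/-- The intertwiner of two rows with spectral parameters `u` and `w`. -/
def rmat {R : Type*} [CommRing R] (τ u w : R) (G : ℤ → ℤ → R) (h h' : ℤ) : R :=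
  if h = 0 ∧ h' = 0 ∨ h = 1 ∧ h' = 1 then (w - τ ^ 2 * u) * G h h'
  else if h = 0 ∧ h' = 1 then (1 - τ ^ 2) * u * G 0 1 + τ * (w - u) * G 1 0
  else if h = 1 ∧ h' = 0 then (1 - τ ^ 2) * w * G 1 0 + τ * (w - u) * G 0 1
  else 0

lemma rmat_twoSite {R : Type*} [CommRing R] (τ u w v : R) (s : ℤ) (G : ℤ → ℤ → ℤ → R)
    (h h' : ℤ) :
    rmat τ u w (twoSite (spec τ u v) (spec τ w v) s G) h h' =
      twoSite (spec τ w v) (spec τ u v) s (fun s' => rmat τ u w (G s')) h h' := by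
  have e0 : ent 0 = -1 := rfl
  have e1 : ent 1 = 0 := rfl
  have e2 : ent 2 = 1 := rfl
  unfold twoSite
  simp only [Fin.sum_univ_three, e0, e1, e2]
  by_cases hs : s = 0 ∨ s = 1
  · by_cases hh : (h = 0 ∨ h = 1) ∧ (h' = 0 ∨ h' = 1)
    · obtain ⟨rfl | rfl, rfl | rfl⟩ := hh <;> rcases hs with rfl | rfl <;>
        simp [rmat, spec, vtx] <;> ring
    · have h1 : rmat τ u w = fun G h h' => rmat τ u w G h h' := rfl
      rw [not_and_or, not_or, not_or] at hh
      rcases hh with ⟨h0, h1⟩ | ⟨h0, h1⟩ <;> simp [rmat, spec, vtx, h0, h1]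
  · rw [not_or] at hs
    simp [rmat, spec, vtx, hs.1, hs.2]

lemma rmat_twoRow {R : Type*} [CommRing R] (τ u w : R) {m : ℕ} (v : Fin m → R) (σ : Fin m → ℤ)
    (f : (Fin m → ℤ) → ℤ → ℤ → R) (h h' : ℤ) :
    rmat τ u w (twoRow (fun j => spec τ u (v j)) (fun j => spec τ w (v j)) σ f) h h' =
      twoRow (fun j => spec τ w (v j)) (fun j => spec τ u (v j)) σ
        (fun ρ => rmat τ u w (f ρ)) h h' := by
  induction m generalizing h h' with
  | zero =>
    have (w w' : Fin 0 → ℤ → ℤ → ℤ → R) (f : (Fin 0 → ℤ) → ℤ → ℤ → R) :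
        twoRow w w' σ f = f σ := by
      funext h h'
      simp [twoRow, rowWt, Subsingleton.elim _ σ]
    rw [this, this]
  | succ m ih =>
    have (w w' : Fin (m + 1) → ℤ → ℤ → ℤ → R) (f : (Fin (m + 1) → ℤ) → ℤ → ℤ → R) :=
      funext fun h => funext fun h' => twoRow_succ w w' σ f h h'
    rw [this, this, rmat_twoSite]
    congr 1
    funext s h h'
    rw [ih]

/-- The partition function with spectral parameters `u` for the rows and `v` for the columns. -/
def sixV {R : Type*} [CommRing R] (τ : R) {k m : ℕ} (u : Fin k → R) (v : Fin m → R)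
    (σ : Fin m → ℤ) : R :=
  part (fun i j => spec τ (u i) (v j)) σ

lemma sixV_cons_cons {R : Type*} [CommRing R] (τ : R) {k m : ℕ} (a b : R) (u : Fin k → R)
    (v : Fin m → R) (σ : Fin m → ℤ) :
    sixV τ (Fin.cons a (Fin.cons b u) : Fin (k + 2) → R) v σ =
      twoRow (fun j => spec τ a (v j)) (fun j => spec τ b (v j)) σ
        (fun ρ h h' => if h = 1 ∧ h' = 1 then sixV τ u v ρ else 0) 0 0 := by
  unfold sixV twoRow
  rw [part_succ]
  refine Finset.sum_congr rfl fun r _ => ?_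
  rw [part_succ, Finset.mul_sum]
  refine Finset.sum_congr rfl fun r' _ => ?_
  simp only [Fin.cons_zero, Fin.cons_succ, zero_add]
  split_ifs <;> simp_all [mul_assoc]

lemma sixV_swap {R : Type*} [CommRing R] [IsDomain R] (τ : R) {k m : ℕ} (a b : R)
    (hab : b - τ ^ 2 * a ≠ 0) (u : Fin k → R) (v : Fin m → R) (σ : Fin m → ℤ) :
    sixV τ (Fin.cons a (Fin.cons b u) : Fin (k + 2) → R) v σ =
      sixV τ (Fin.cons b (Fin.cons a u) : Fin (k + 2) → R) v σ := by
  rw [sixV_cons_cons, sixV_cons_cons]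
  apply mul_left_cancel₀ hab
  have key := rmat_twoRow τ a b v σ
    (fun ρ h h' => if h = 1 ∧ h' = 1 then sixV τ u v ρ else 0) 0 0
  have h1 : rmat τ a b (twoRow (fun j => spec τ a (v j)) (fun j => spec τ b (v j)) σ
      (fun ρ h h' => if h = 1 ∧ h' = 1 then sixV τ u v ρ else 0)) 0 0 =
      (b - τ ^ 2 * a) * twoRow (fun j => spec τ a (v j)) (fun j => spec τ b (v j)) σ
        (fun ρ h h' => if h = 1 ∧ h' = 1 then sixV τ u v ρ else 0) 0 0 := by
    simp [rmat]
  rw [← h1, key]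
  unfold twoRow
  simp only [Finset.mul_sum]
  refine Finset.sum_congr rfl fun r _ => Finset.sum_congr rfl fun r' _ => ?_
  have h2 (x y : ℤ) (c : R) : rmat τ a b (fun h h' => if h = 1 ∧ h' = 1 then c else 0) x y =
      (b - τ ^ 2 * a) * if x = 1 ∧ y = 1 then c else 0 := by
    unfold rmat
    split_ifs <;> simp_all
  rw [h2]
  ring

lemma sixV_cons {R : Type*} [CommRing R] (τ : R) {k m : ℕ} (u : Fin (k + 1) → R)
    (v : Fin m → R) (σ : Fin m → ℤ) :
    sixV τ u v σ = ∑ r : Fin m → Fin 3,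
      (if ∑ j, ent (r j) = 1 then rowWt (fun j => spec τ (u 0) (v j)) 0 σ r else 0) *
        sixV τ (fun i => u i.succ) v (fun j => σ j + ent (r j)) :=
  part_succ _ σ

/-- Any row may be moved to the top. -/
lemma sixV_moveTop {R : Type*} [CommRing R] [IsDomain R] (τ : R) {k m : ℕ} (u : Fin (k + 1) → R)
    (hu : ∀ i j, i ≠ j → u i - τ ^ 2 * u j ≠ 0) (v : Fin m → R) (i : Fin (k + 1))
    (σ : Fin m → ℤ) :
    sixV τ u v σ = sixV τ (Fin.cons (u i) (fun l => u (i.succAbove l)) : Fin (k + 1) → R) v σ := by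
  induction k generalizing σ with
  | zero =>
    congr 1
    funext l
    rw [Fin.fin_one_eq_zero i, Fin.fin_one_eq_zero l, Fin.cons_zero]
  | succ k ih =>
    induction i using Fin.cases with
    | zero =>
      congr 1
      funext l
      refine Fin.cases ?_ (fun l => ?_) l <;> simp
    | succ i =>
      have h1 : (Fin.cons (u i.succ) (fun l => u (i.succ.succAbove l)) : Fin (k + 2) → R) =
          Fin.cons (u i.succ) (Fin.cons (u 0) fun l => u (i.succAbove l).succ) := by
        funext l
        refine Fin.cases rfl (fun l => ?_) l
        refine Fin.cases ?_ (fun l => ?_) l <;> simp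
      rw [h1, sixV_swap τ _ _ (hu 0 i.succ (Fin.succ_ne_zero i).symm), sixV_cons, sixV_cons]
      refine Finset.sum_congr rfl fun r _ => ?_
      rw [ih (fun l => u l.succ) (fun a b hab => hu _ _ (by simpa using hab)) i]
      simp only [Fin.cons_zero, Fin.cons_succ]

lemma sum_fin_snoc {α M : Type*} [Fintype α] [AddCommMonoid M] {n : ℕ}
    (f : (Fin (n + 1) → α) → M) :
    ∑ e, f e = ∑ r, ∑ a, f (Fin.snoc r a) := by
  rw [← (Fin.snocEquiv (fun _ : Fin (n + 1) => α)).sum_comp, Fintype.sum_prod_type_right]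
  rfl

lemma rowWt_snoc {R : Type*} [CommRing R] {m : ℕ} (w : Fin (m + 1) → ℤ → ℤ → ℤ → R) (h : ℤ)
    (σ : Fin (m + 1) → ℤ) (r : Fin m → Fin 3) (a : Fin 3) :
    rowWt w h σ (Fin.snoc r a) =
      rowWt (fun j => w j.castSucc) h (fun j => σ j.castSucc) r *
        w (Fin.last m) (h + ∑ j, ent (r j)) (σ (Fin.last m)) (ent a) := by
  unfold rowWt
  simp only [Fin.snoc_castSucc, Fin.snoc_last, Fin.prod_univ_castSucc, Fin.sum_univ_castSucc,
    Fin.castSucc_lt_castSucc_iff, Fin.castSucc_lt_last, if_true, if_false, add_zero,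
    not_lt_of_ge (Fin.le_last _)]

lemma ent_zero : ent 0 = -1 := rfl

lemma ent_one : ent 1 = 0 := rfl

lemma ent_two : ent 2 = 1 := rfl

/-- A last column entered by edge `1` is frozen. -/
lemma part_snoc_one {R : Type*} [CommRing R] {k m : ℕ} (a b c d : Fin k → Fin (m + 1) → R)
    (σ : Fin (m + 1) → ℤ) (hσ : σ (Fin.last m) = 1) :
    part (fun i j => vtx (a i j) (b i j) (c i j) (d i j)) σ =
      (∏ i, a i (Fin.last m)) * part (fun i j => vtx (a i (Fin.castSucc j))
        (b i (Fin.castSucc j)) (c i (Fin.castSucc j)) (d i (Fin.castSucc j)))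
        (fun j => σ j.castSucc) := by
  induction k generalizing σ with
  | zero =>
    simp [part, Fin.forall_fin_succ', hσ]
  | succ k ih =>
    rw [part_succ, part_succ, sum_fin_snoc, Finset.mul_sum]
    refine Finset.sum_congr rfl fun r _ => ?_
    rw [Fin.sum_univ_three]
    simp only [rowWt_snoc, ent_zero, ent_one, ent_two, Fin.sum_univ_castSucc,
      Fin.snoc_castSucc, Fin.snoc_last, hσ, add_zero, zero_add]
    rw [ih (fun i => a i.succ) (fun i => b i.succ) (fun i => c i.succ) (fun i => d i.succ)
      (fun j => σ j + ent ((Fin.snoc r 1 : Fin (m + 1) → Fin 3) j)) (by simp [hσ, ent_one])]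
    by_cases h0 : ∑ j, ent (r j) = 0
    · simp [h0, vtx]
    · by_cases h1 : ∑ j, ent (r j) = 1
      · simp only [h1, vtx, Fin.snoc_castSucc, Fin.prod_univ_succ]
        simp
        ring
      · by_cases h2 : ∑ j, ent (r j) = 2
        · simp [h2, vtx]
        · simp [h1, h0, vtx]

lemma rowWt_zero_of_sum_eq_zero {R : Type*} [CommRing R] {m : ℕ} (a b c d : Fin m → R)
    (r : Fin m → Fin 3) (hr : ∑ j, ent (r j) = 0) :
    rowWt (fun j => vtx (a j) (b j) (c j) (d j)) 0 0 r = if r = 1 then ∏ j, a j else 0 := by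
  split_ifs with h
  · subst h
    simp [rowWt, ent_one, vtx]
  · have hneg : ∃ j, ent (r j) = -1 := by
      by_contra! hcon
      apply h
      have hnn : ∀ j ∈ univ, 0 ≤ ent (r j) := by
        intro j _
        have := hcon j
        generalize r j = x at this
        revert this
        fin_cases x <;> simp [ent]
      have := (Finset.sum_eq_zero_iff_of_nonneg hnn).1 hr
      funext j
      have h1 := this j (Finset.mem_univ j)
      generalize r j = x at h1
      revert h1
      fin_cases x <;> simp [ent]
    obtain ⟨j, hj⟩ := hneg
    apply Finset.prod_eq_zero (Finset.mem_univ j)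
    simp [vtx, hj]

/-- The partition function is affine in the weights of the top right corner. -/
lemma part_corner {R : Type*} [CommRing R] {k m : ℕ} (a b c d : Fin (k + 1) → Fin (m + 1) → R) :
    part (fun i j => vtx (a i j) (b i j) (c i j) (d i j)) 0 =
      c 0 (Fin.last m) * ((∏ j : Fin m, a 0 j.castSucc) * (∏ i : Fin k, a i.succ (Fin.last m)) *
        part (fun (i : Fin k) (j : Fin m) => vtx (a i.succ j.castSucc) (b i.succ j.castSucc)
          (c i.succ j.castSucc) (d i.succ j.castSucc)) 0) +
      b 0 (Fin.last m) * ∑ r : Fin m → Fin 3, if ∑ j, ent (r j) = 1 then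
        rowWt (fun j : Fin m => vtx (a 0 j.castSucc) (b 0 j.castSucc) (c 0 j.castSucc)
          (d 0 j.castSucc)) 0 0 r *
        part (fun (i : Fin k) j => vtx (a i.succ j) (b i.succ j) (c i.succ j) (d i.succ j))
          (Fin.snoc (fun j => ent (r j)) 0 : Fin (m + 1) → ℤ) else 0 := by
  have key (r : Fin m → Fin 3) (x : Fin 3) :
      (fun j : Fin (m + 1) => (0 : Fin (m + 1) → ℤ) j +
        ent ((Fin.snoc r x : Fin (m + 1) → Fin 3) j)) =
      (Fin.snoc (fun j => ent (r j)) (ent x) : Fin (m + 1) → ℤ) := by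
    funext j
    refine Fin.lastCases ?_ (fun j => ?_) j <;> simp
  have hsplit (r : Fin m → Fin 3) : ∑ x : Fin 3,
      (if ∑ j, ent ((Fin.snoc r x : Fin (m + 1) → Fin 3) j) = 1 then
        rowWt (fun j => vtx (a 0 j) (b 0 j) (c 0 j) (d 0 j)) 0 0 (Fin.snoc r x) else 0) *
      part (fun (i : Fin k) j => vtx (a i.succ j) (b i.succ j) (c i.succ j) (d i.succ j))
        (Fin.snoc (fun j => ent (r j)) (ent x) : Fin (m + 1) → ℤ) =
      (if r = 1 then c 0 (Fin.last m) * ((∏ j : Fin m, a 0 j.castSucc) *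
        (∏ i : Fin k, a i.succ (Fin.last m)) *
        part (fun (i : Fin k) (j : Fin m) => vtx (a i.succ j.castSucc) (b i.succ j.castSucc)
          (c i.succ j.castSucc) (d i.succ j.castSucc)) 0) else 0) +
      b 0 (Fin.last m) * if ∑ j, ent (r j) = 1 then
        rowWt (fun j : Fin m => vtx (a 0 j.castSucc) (b 0 j.castSucc) (c 0 j.castSucc)
          (d 0 j.castSucc)) 0 0 r *
        part (fun (i : Fin k) j => vtx (a i.succ j) (b i.succ j) (c i.succ j) (d i.succ j))
          (Fin.snoc (fun j => ent (r j)) 0 : Fin (m + 1) → ℤ) else 0 := by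
    rw [Fin.sum_univ_three]
    simp only [rowWt_snoc, ent_zero, ent_one, ent_two, Fin.sum_univ_castSucc,
      Fin.snoc_castSucc, Fin.snoc_last, zero_add, add_zero]
    have h1r : r = 1 → ∑ j, ent (r j) = 0 := by
      rintro rfl
      simp [ent_one]
    by_cases h0 : ∑ j, ent (r j) = 0
    · rw [part_snoc_one _ _ _ _ _ (Fin.snoc_last _ _)]
      have := rowWt_zero_of_sum_eq_zero (fun j : Fin m => a 0 j.castSucc)
        (fun j => b 0 j.castSucc) (fun j => c 0 j.castSucc) (fun j => d 0 j.castSucc) r h0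
      have z : (fun j : Fin m => (0 : Fin (m + 1) → ℤ) j.castSucc) = 0 := rfl
      rw [z, this]
      by_cases hr : r = 1
      · subst hr
        have z' : (0 : Fin m → ℤ) = fun _ => 0 := rfl
        simp [vtx, ent_one, z']
        ring
      · simp [h0, hr]
    · have hr : r ≠ 1 := fun h => h0 (h1r h)
      by_cases h1 : ∑ j, ent (r j) = 1
      · have z' : (0 : Fin m → ℤ) = fun _ => 0 := rfl
        simp [h1, hr, vtx, z']
        ring
      · by_cases h2 : ∑ j, ent (r j) = 2
        · simp [h2, hr, vtx]
        · simp [h0, h1, hr, vtx]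
  rw [part_succ, sum_fin_snoc]
  simp only [key]
  rw [Finset.sum_congr rfl fun r _ => hsplit r, Finset.sum_add_distrib, ← Finset.mul_sum,
    Finset.sum_ite_eq' univ (1 : Fin m → Fin 3)]
  simp

lemma map_vtx {R S : Type*} [CommRing R] [CommRing S] (φ : R →+* S) (a b c d : R) (h v e : ℤ) :
    φ (vtx a b c d h v e) = vtx (φ a) (φ b) (φ c) (φ d) h v e := by
  unfold vtx
  simp only [apply_ite φ, map_zero]

lemma map_part {R S : Type*} [CommRing R] [CommRing S] (φ : R →+* S) {k m : ℕ}
    (w : Fin k → Fin m → ℤ → ℤ → ℤ → R) (σ : Fin m → ℤ) :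
    φ (part w σ) = part (fun i j h v e => φ (w i j h v e)) σ := by
  unfold part
  simp only [map_sum, apply_ite φ, map_prod, map_zero]

lemma map_sixV {R S : Type*} [CommRing R] [CommRing S] (φ : R →+* S) (τ : R) {k m : ℕ}
    (u : Fin k → R) (v : Fin m → R) (σ : Fin m → ℤ) :
    φ (sixV τ u v σ) = sixV (φ τ) (fun i => φ (u i)) (fun j => φ (v j)) σ := by
  unfold sixV
  rw [map_part]
  simp only [spec, map_vtx, map_sub, map_mul, map_pow, map_one]

/-- The Vandermonde product. -/
def vdm {R : Type*} [CommRing R] {n : ℕ} (v : Fin n → R) : R :=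
  ∏ i, ∏ j, if i < j then v j - v i else 1

lemma vdm_eq_det {R : Type*} [CommRing R] {n : ℕ} (v : Fin n → R) :
    vdm v = (Matrix.vandermonde v).det := by
  rw [Matrix.det_vandermonde]
  unfold vdm
  refine Finset.prod_congr rfl fun i _ => ?_
  rw [← Finset.prod_filter]
  congr 1
  ext j
  simp

lemma vdm_succ {R : Type*} [CommRing R] {n : ℕ} (v : Fin (n + 1) → R) :
    vdm v = (∏ j : Fin n, (v j.succ - v 0)) * vdm (fun j => v j.succ) := by
  simp only [vdm, Fin.prod_univ_succ, Fin.not_lt_zero, Fin.succ_pos, Fin.succ_lt_succ_iff,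
    if_true, if_false, one_mul]

lemma vdm_castSucc {R : Type*} [CommRing R] {n : ℕ} (v : Fin (n + 1) → R) :
    vdm v = vdm (fun j => v j.castSucc) * ∏ j : Fin n, (v (Fin.last n) - v j.castSucc) := by
  have h (i : Fin n) : ¬ Fin.last n < i.castSucc := not_lt_of_ge (Fin.le_last _)
  simp only [vdm, Fin.prod_univ_castSucc, Fin.castSucc_lt_last, Fin.castSucc_lt_castSucc_iff, h,
    if_true, if_false, lt_irrefl, mul_one, Finset.prod_const_one, Finset.prod_mul_distrib]

lemma vdm_comp_perm {R : Type*} [CommRing R] {n : ℕ} (v : Fin n → R) (p : Equiv.Perm (Fin n)) :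
    vdm (fun i => v (p i)) = ((Equiv.Perm.sign p : ℤ) : R) * vdm v := by
  rw [vdm_eq_det, vdm_eq_det, ← Matrix.det_permute]
  rfl

lemma vdm_eq_zero {R : Type*} [CommRing R] {n : ℕ} {v : Fin n → R} {i j : Fin n} (hij : i ≠ j)
    (h : v i = v j) : vdm v = 0 := by
  rw [vdm_eq_det]
  refine Matrix.det_zero_of_row_eq hij ?_
  funext k
  simp [Matrix.vandermonde, h]

lemma vdm_ne_zero {R : Type*} [CommRing R] [IsDomain R] {n : ℕ} {v : Fin n → R}
    (h : Function.Injective v) : vdm v ≠ 0 := by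
  rw [vdm_eq_det]
  exact Matrix.det_vandermonde_ne_zero_iff.2 h

lemma map_vdm {R S : Type*} [CommRing R] [CommRing S] (φ : R →+* S) {n : ℕ} (v : Fin n → R) :
    φ (vdm v) = vdm (fun i => φ (v i)) := by
  simp only [vdm, map_prod, apply_ite φ, map_sub, map_one]

/-- The Izergin–Korepin matrix with denominators cleared by columns. -/
def ikMat {R : Type*} [CommRing R] (τ : R) {n : ℕ} (u v : Fin n → R) : Matrix (Fin n) (Fin n) R :=
  Matrix.of fun i j => ∏ k, if k = i then 1 else (u k - τ ^ 2 * v j) * (u k - v j)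

lemma map_ikMat_det {R S : Type*} [CommRing R] [CommRing S] (φ : R →+* S) (τ : R) {n : ℕ}
    (u v : Fin n → R) :
    φ (ikMat τ u v).det = (ikMat (φ τ) (fun i => φ (u i)) (fun j => φ (v j))).det := by
  rw [RingHom.map_det]
  congr 1
  ext i j
  simp only [ikMat, RingHom.mapMatrix_apply, Matrix.map_apply, Matrix.of_apply, map_prod,
    apply_ite φ, map_mul, map_sub, map_pow, map_one]

lemma ikMat_comp_perm {R : Type*} [CommRing R] (τ : R) {n : ℕ} (u v : Fin n → R)
    (p : Equiv.Perm (Fin n)) :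
    (ikMat τ (fun i => u (p i)) v).det = ((Equiv.Perm.sign p : ℤ) : R) * (ikMat τ u v).det := by
  rw [← Matrix.det_permute]
  congr 1
  ext i j
  simp only [ikMat, Matrix.of_apply, Matrix.submatrix_apply, id]
  rw [← Equiv.prod_comp p (fun k => if k = p i then 1 else _)]
  simp only [p.injective.eq_iff]

/-- The Izergin–Korepin formula when the first row parameter meets the last column parameter. -/
lemma ik_corner {R : Type*} [CommRing R] (τ : R) {n : ℕ} (u : Fin (n + 1) → R) (v : Fin n → R)
    (ih : sixV τ (fun i => u i.succ) v 0 * vdm (fun i => u i.succ) * vdm (fun j => -v j) =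
      (ikMat τ (fun i => u i.succ) v).det) :
    sixV τ u (Fin.snoc v (u 0) : Fin (n + 1) → R) 0 * vdm u *
        vdm (fun j => -(Fin.snoc v (u 0) : Fin (n + 1) → R) j) =
      (ikMat τ u (Fin.snoc v (u 0) : Fin (n + 1) → R)).det := by
  have h1 : sixV τ u (Fin.snoc v (u 0) : Fin (n + 1) → R) 0 =
      (∏ j, (u 0 - τ ^ 2 * v j)) * (∏ i : Fin n, (u i.succ - τ ^ 2 * u 0)) *
        sixV τ (fun i => u i.succ) v 0 := by
    unfold sixV spec
    rw [part_corner]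
    simp
  have h2 : (ikMat τ u (Fin.snoc v (u 0) : Fin (n + 1) → R)).det =
      (-1) ^ n * (∏ k : Fin n, (u k.succ - τ ^ 2 * u 0) * (u k.succ - u 0)) *
        ((∏ j, (u 0 - τ ^ 2 * v j) * (u 0 - v j)) * (ikMat τ (fun i => u i.succ) v).det) := by
    rw [Matrix.det_succ_column _ (Fin.last n), Fin.sum_univ_succ, ← Matrix.det_mul_row]
    have h3 (i : Fin n) : ikMat τ u (Fin.snoc v (u 0) : Fin (n + 1) → R) i.succ
        (Fin.last n) = 0 := by
      simp [ikMat, Fin.prod_univ_succ, (Fin.succ_ne_zero i).symm]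
    simp only [h3, mul_zero, zero_mul, Finset.sum_const_zero, add_zero]
    congr 1
    · simp [ikMat, Fin.prod_univ_succ, Fin.succ_ne_zero]
    · congr 1
      ext i j
      simp [ikMat, Fin.prod_univ_succ, (Fin.succ_ne_zero i).symm]
  have h3 : ∏ j : Fin n, (u 0 - v j) = (-1) ^ n * ∏ j : Fin n, (v j - u 0) := by
    rw [← Fin.prod_const, ← Finset.prod_mul_distrib]
    exact Finset.prod_congr rfl fun j _ => by ring
  have h4 : ((-1 : R) ^ n) * (-1) ^ n = 1 := by rw [← mul_pow]; simp
  rw [h1, h2, ← ih, vdm_succ u, vdm_castSucc (fun j => -(Fin.snoc v (u 0) : Fin (n + 1) → R) j),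
    Finset.prod_mul_distrib, Finset.prod_mul_distrib, h3]
  simp only [Fin.snoc_castSucc, Fin.snoc_last, neg_sub_neg]
  linear_combination (-(∏ j, (u 0 - τ ^ 2 * v j)) * (∏ i : Fin n, (u i.succ - τ ^ 2 * u 0)) *
    (∏ i : Fin n, (u i.succ - u 0)) * (∏ j, (v j - u 0)) * sixV τ (fun i => u i.succ) v 0 *
    vdm (fun i => u i.succ) * vdm (fun j => -v j)) * h4

lemma ik_row {R : Type*} [CommRing R] [IsDomain R] (τ : R) {n : ℕ} (u : Fin (n + 1) → R)
    (v : Fin n → R) (hu : ∀ i j, i ≠ j → u i - τ ^ 2 * u j ≠ 0) (i : Fin (n + 1))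
    (ih : sixV τ (fun l => u (i.succAbove l)) v 0 * vdm (fun l => u (i.succAbove l)) *
      vdm (fun j => -v j) = (ikMat τ (fun l => u (i.succAbove l)) v).det) :
    sixV τ u (Fin.snoc v (u i) : Fin (n + 1) → R) 0 * vdm u *
        vdm (fun j => -(Fin.snoc v (u i) : Fin (n + 1) → R) j) =
      (ikMat τ u (Fin.snoc v (u i) : Fin (n + 1) → R)).det := by
  have hp : (fun l => u (i.cycleRange.symm l)) =
      (Fin.cons (u i) (fun l => u (i.succAbove l)) : Fin (n + 1) → R) := by
    funext l
    refine Fin.cases ?_ (fun l => ?_) l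
    · simp
    · simp
  have key := ik_corner τ (Fin.cons (u i) (fun l => u (i.succAbove l)) : Fin (n + 1) → R) v
    (by simpa only [Fin.cons_succ] using ih)
  rw [Fin.cons_zero, ← sixV_moveTop τ u hu, ← hp, vdm_comp_perm, ikMat_comp_perm] at key
  have hs : ((Equiv.Perm.sign i.cycleRange.symm : ℤ) : R) ≠ 0 := by
    rcases Int.units_eq_one_or (Equiv.Perm.sign i.cycleRange.symm) with h | h <;> simp [h]
  apply mul_left_cancel₀ hs
  linear_combination key

lemma natDegree_sixV_snoc_le {R : Type*} [CommRing R] (τ : R) {n : ℕ} (u : Fin (n + 1) → R)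
    (v : Fin n → R) :
    (sixV (Polynomial.C τ) (fun i => Polynomial.C (u i))
      (Fin.snoc (fun j => Polynomial.C (v j)) Polynomial.X : Fin (n + 1) → Polynomial R)
      0).natDegree ≤ n := by
  have hsite (p : R) (h s : ℤ) (x : Fin 3) :
      (spec (Polynomial.C τ) (Polynomial.C p) Polynomial.X h s (ent x)).natDegree ≤
        if ent x = 1 then 0 else 1 := by
    have e1 : (Polynomial.C p - Polynomial.C τ ^ 2 * Polynomial.X :
        Polynomial R).natDegree ≤ 1 := by
      compute_degree
    have e2 : (Polynomial.C τ * (Polynomial.C p - Polynomial.X) : Polynomial R).natDegree ≤ 1 := by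
      compute_degree
    have e3 : ((1 - Polynomial.C τ ^ 2) ^ 2 * Polynomial.C p * Polynomial.X :
        Polynomial R).natDegree ≤ 1 := by
      have : ((1 - Polynomial.C τ ^ 2) ^ 2 * Polynomial.C p * Polynomial.X : Polynomial R) =
        Polynomial.C ((1 - τ ^ 2) ^ 2 * p) * Polynomial.X := by simp
      rw [this]
      compute_degree
    unfold spec vtx
    generalize ent x = y
    split_ifs <;> simp_all
  have hconst (p q : R) (h s e : ℤ) :
      (spec (Polynomial.C τ) (Polynomial.C p) (Polynomial.C q) h s e).natDegree = 0 := by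
    have : spec (Polynomial.C τ) (Polynomial.C p) (Polynomial.C q) h s e =
        Polynomial.C (spec τ p q h s e) := by
      simp only [spec, map_vtx, map_sub, map_mul, map_pow, map_one]
    rw [this, Polynomial.natDegree_C]
  unfold sixV part
  refine Polynomial.natDegree_sum_le_of_forall_le _ _ fun e _ => ?_
  split_ifs with he
  · refine (Polynomial.natDegree_prod_le _ _).trans ?_
    have hone : ∃ i, ent (e i (Fin.last n)) = 1 := by
      by_contra! hcon
      have h1 := he.2 (Fin.last n)
      have h2 : ∑ i, ent (e i (Fin.last n)) ≤ 0 := by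
        refine Finset.sum_nonpos fun i _ => ?_
        have := hcon i
        generalize e i (Fin.last n) = x at this
        revert this
        fin_cases x <;> simp [ent]
      simp at h1
      omega
    obtain ⟨i₀, hi₀⟩ := hone
    calc _ ≤ ∑ i, (if i = i₀ then 0 else 1) := by
          refine Finset.sum_le_sum fun i _ => ?_
          refine (Polynomial.natDegree_prod_le _ _).trans ?_
          rw [Fin.sum_univ_castSucc]
          simp only [Fin.snoc_castSucc, Fin.snoc_last, hconst, Finset.sum_const_zero, zero_add]
          refine (hsite _ _ _ _).trans ?_
          by_cases hi : i = i₀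
          · subst hi
            simp [hi₀]
          · simp only [hi, if_false]
            split_ifs <;> simp
      _ ≤ n := by
          rw [Finset.sum_ite]
          simp [Finset.filter_ne']
  · simp

/-- The Izergin–Korepin determinant formula. -/
lemma izerginKorepin {R : Type*} [CommRing R] [IsDomain R] (τ : R) {n : ℕ} (u v : Fin n → R)
    (hu : Function.Injective u) (hv : Function.Injective v) (huv : ∀ i j, u i ≠ v j)
    (hτ : ∀ i j, i ≠ j → u i - τ ^ 2 * u j ≠ 0) :
    sixV τ u v 0 * vdm u * vdm (fun j => -v j) = (ikMat τ u v).det := by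
  induction n with
  | zero => simp [sixV, part, vdm]
  | succ n ih =>
    obtain ⟨v, x, rfl⟩ : ∃ (v' : Fin n → R) (x : R), v = (Fin.snoc v' x : Fin (n + 1) → R) :=
      ⟨_, _, (Fin.snoc_init_self v).symm⟩
    have hv' : Function.Injective v := fun i j h => by
      simpa using @hv i.castSucc j.castSucc (by simpa using h)
    have huv' (i : Fin (n + 1)) (j : Fin n) : u i ≠ v j := by simpa using huv i j.castSucc
    let V : Fin (n + 1) → Polynomial R := Fin.snoc (fun j => Polynomial.C (v j)) Polynomial.X
    let P : Polynomial R := sixV (Polynomial.C τ) (fun i => Polynomial.C (u i)) V 0 *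
      vdm (fun i => Polynomial.C (u i)) * vdm (fun j => -V j) -
      (ikMat (Polynomial.C τ) (fun i => Polynomial.C (u i)) V).det
    have hV (y : R) : (fun j => Polynomial.evalRingHom y (V j)) =
        (Fin.snoc v y : Fin (n + 1) → R) := by
      funext j
      refine Fin.lastCases ?_ (fun j => ?_) j <;> simp [V]
    have heval (y : R) : Polynomial.evalRingHom y P =
        sixV τ u (Fin.snoc v y : Fin (n + 1) → R) 0 * vdm u *
          vdm (fun j => -(Fin.snoc v y : Fin (n + 1) → R) j) -
          (ikMat τ u (Fin.snoc v y : Fin (n + 1) → R)).det := by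
      simp only [P, map_sub, map_mul, map_sixV, map_vdm, map_ikMat_det, map_neg, hV]
      rw [← hV y]
      simp
    suffices hP : P = 0 by
      have := heval x
      rw [hP, map_zero] at this
      exact (sub_eq_zero.1 this.symm)
    have hdeg : P.natDegree ≤ 2 * n := by
      refine (Polynomial.natDegree_sub_le_of_le (m := 2 * n) (n := 2 * n) ?_ ?_).trans (by simp)
      · have h1 : vdm (fun i => Polynomial.C (u i)) = Polynomial.C (vdm u) := (map_vdm _ _).symm
        have h2 : vdm (fun j => -V j.castSucc) = Polynomial.C (vdm (fun j => -v j)) := by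
          rw [map_vdm]
          simp [V]
        rw [h1, vdm_castSucc (fun j => -V j), h2, two_mul, ← mul_assoc]
        refine Polynomial.natDegree_mul_le_of_le (m := n) (n := n) ?_ ?_
        · refine (Polynomial.natDegree_mul_C_le _ _).trans ?_
          refine (Polynomial.natDegree_mul_C_le _ _).trans ?_
          exact natDegree_sixV_snoc_le τ u v
        · refine (Polynomial.natDegree_prod_le _ _).trans ?_
          refine (Finset.sum_le_card_nsmul _ _ 1 fun j _ => ?_).trans (by simp)
          simp only [V, Fin.snoc_castSucc, Fin.snoc_last]
          compute_degree
      · rw [Matrix.det_succ_column _ (Fin.last n)]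
        refine Polynomial.natDegree_sum_le_of_forall_le _ _ fun i _ => ?_
        have h1 : ((ikMat (Polynomial.C τ) (fun i => Polynomial.C (u i)) V).submatrix i.succAbove
            (Fin.last n).succAbove).det =
            Polynomial.C ((ikMat τ u (Fin.snoc v 0 : Fin (n + 1) → R)).submatrix i.succAbove
              (Fin.last n).succAbove).det := by
          rw [RingHom.map_det]
          congr 1
          ext k j : 2
          simp [ikMat, V, apply_ite Polynomial.C, map_prod]
        rw [h1]
        refine (Polynomial.natDegree_mul_C_le _ _).trans ?_
        have h2 : ((-1 : Polynomial R) ^ ((i : ℕ) + (Fin.last n : ℕ))) =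
            Polynomial.C ((-1) ^ ((i : ℕ) + (Fin.last n : ℕ))) := by simp
        rw [h2]
        refine (Polynomial.natDegree_C_mul_le _ _).trans ?_
        simp only [ikMat, V, Matrix.of_apply, Fin.snoc_last]
        refine (Polynomial.natDegree_prod_le _ _).trans ?_
        calc _ ≤ ∑ k, (if k = i then 0 else 2) := by
              refine Finset.sum_le_sum fun k _ => ?_
              split_ifs
              · simp
              · compute_degree
          _ ≤ 2 * n := by
              rw [Finset.sum_ite]
              simp [Finset.filter_ne', mul_comm]
    refine Polynomial.eq_zero_of_natDegree_lt_card_of_eval_eq_zero P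
      (f := (Sum.elim u v : Fin (n + 1) ⊕ Fin n → R)) (hu.sumElim hv' huv') ?_
      (by simp; omega)
    rintro (i | j)
    · rw [← Polynomial.coe_evalRingHom, heval, sub_eq_zero]
      refine ik_row τ u v hτ i (ih _ _ (hu.comp Fin.succAbove_right_injective) hv'
        (fun _ _ => huv' _ _) fun a b hab => hτ _ _ ?_)
      exact fun h => hab (Fin.succAbove_right_injective h)
    · rw [← Polynomial.coe_evalRingHom, heval, sub_eq_zero]
      have hne : j.castSucc ≠ Fin.last n := (Fin.castSucc_lt_last j).ne
      rw [vdm_eq_zero (v := fun j => -_) hne (by simp), mul_zero, Matrix.det_zero_of_column_eq hne]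
      intro k
      simp [ikMat]

lemma det_mul_det_toBlocks₁₁_adjugate {R m n : Type*} [CommRing R] [Fintype m] [Fintype n]
    [DecidableEq m] [DecidableEq n] (M : Matrix (m ⊕ n) (m ⊕ n) R) :
    M.det * M.adjugate.toBlocks₁₁.det = M.det ^ Fintype.card m * M.toBlocks₂₂.det := by
  have h : M * Matrix.fromBlocks M.adjugate.toBlocks₁₁ 0 M.adjugate.toBlocks₂₁ 1 =
      Matrix.fromBlocks (M.det • 1) M.toBlocks₁₂ 0 M.toBlocks₂₂ := by
    have h1 := M.mul_adjugate
    rw [← Matrix.fromBlocks_toBlocks M, ← Matrix.fromBlocks_toBlocks (Matrix.adjugate _),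
      Matrix.fromBlocks_multiply, ← Matrix.fromBlocks_one, Matrix.fromBlocks_smul,
      Matrix.fromBlocks_inj, Matrix.fromBlocks_toBlocks] at h1
    conv_lhs => rw [← Matrix.fromBlocks_toBlocks M]
    rw [Matrix.fromBlocks_multiply, Matrix.fromBlocks_toBlocks, h1.1, h1.2.2.1]
    simp
  have h2 := congrArg Matrix.det h
  rw [Matrix.det_mul, Matrix.det_fromBlocks_zero₁₂, Matrix.det_fromBlocks_zero₂₁, Matrix.det_smul]
    at h2
  simpa using h2

/-- The Desnanot–Jacobi identity. -/
lemma desnanotJacobi {R : Type*} [CommRing R] {n : ℕ} (M : Matrix (Fin (n + 2)) (Fin (n + 2)) R) :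
    M.det * (M.submatrix (fun i : Fin n => i.castSucc.succ)
        (fun i : Fin n => i.castSucc.succ)).det =
      (M.submatrix Fin.succ Fin.succ).det * (M.submatrix Fin.castSucc Fin.castSucc).det -
        (M.submatrix Fin.succ Fin.castSucc).det * (M.submatrix Fin.castSucc Fin.succ).det := by
  suffices H : ∀ (S : Type) [CommRing S] [IsDomain S] (M : Matrix (Fin (n + 2)) (Fin (n + 2)) S),
      M.det ≠ 0 → M.det * (M.submatrix (fun i : Fin n => i.castSucc.succ)
        (fun i : Fin n => i.castSucc.succ)).det =
      (M.submatrix Fin.succ Fin.succ).det * (M.submatrix Fin.castSucc Fin.castSucc).det -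
        (M.submatrix Fin.succ Fin.castSucc).det * (M.submatrix Fin.castSucc Fin.succ).det by
    have h := H _ (Matrix.mvPolynomialX (Fin (n + 2)) (Fin (n + 2)) ℤ)
      (Matrix.det_mvPolynomialX_ne_zero _ _)
    let φ := MvPolynomial.eval₂Hom (Int.castRingHom R)
      (fun p : Fin (n + 2) × Fin (n + 2) => M p.1 p.2)
    have hφ : (Matrix.mvPolynomialX (Fin (n + 2)) (Fin (n + 2)) ℤ).map φ = M := by
      ext i j
      simp [φ]
    have h1 := congrArg φ h
    simpa only [map_sub, map_mul, RingHom.map_det, RingHom.mapMatrix_apply,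
      ← Matrix.submatrix_map, hφ] using h1
  intro S _ _ M hM
  let g : Fin 2 ⊕ Fin n → Fin (n + 2) :=
    Sum.elim ![0, Fin.last (n + 1)] (fun i => i.castSucc.succ)
  have hg : Function.Bijective g := by
    rw [Fintype.bijective_iff_injective_and_card]
    refine ⟨Function.Injective.sumElim ?_ ?_ ?_, by simp; omega⟩
    · intro a b
      fin_cases a <;> fin_cases b <;> simp [Fin.ext_iff]
    · intro a b
      simp
    · intro a b
      have := b.isLt
      fin_cases a <;> simp [Fin.ext_iff]
      omega
  let e := Equiv.ofBijective g hg
  have key := det_mul_det_toBlocks₁₁_adjugate (M.submatrix e e)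
  rw [Matrix.det_submatrix_equiv_self, Matrix.adjugate_submatrix_equiv_self, Fintype.card_fin,
    pow_two, mul_assoc] at key
  have key := mul_left_cancel₀ hM key
  have h22 : (M.submatrix e e).toBlocks₂₂ = M.submatrix (fun i : Fin n => i.castSucc.succ)
    (fun i : Fin n => i.castSucc.succ) := rfl
  have e0 : e (Sum.inl 0) = 0 := rfl
  have e1 : e (Sum.inl 1) = Fin.last (n + 1) := rfl
  have hs : ((-1 : S) ^ (n + 1)) * (-1) ^ (n + 1) = 1 := by rw [← mul_pow]; simp
  rw [← h22, ← key, Matrix.det_fin_two]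
  simp only [Matrix.toBlocks₁₁, Matrix.of_apply, Matrix.submatrix_apply, e0, e1,
    Matrix.adjugate_fin_succ_eq_det_submatrix, Fin.succAbove_zero, Fin.succAbove_last,
    Fin.val_zero, Fin.val_last, add_zero, zero_add, pow_zero, one_mul, pow_add (-1 : S) (n + 1)]
  simp only [hs]
  linear_combination -(M.submatrix Fin.castSucc Fin.succ).det *
    (M.submatrix Fin.succ Fin.castSucc).det * hs

lemma vdm_desnanotJacobi {R : Type*} [CommRing R] {n : ℕ} (v : Fin (n + 2) → R) :
    vdm v * vdm (fun i : Fin n => v i.castSucc.succ) =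
      (v (Fin.last (n + 1)) - v 0) *
        (vdm (fun i : Fin (n + 1) => v i.succ) * vdm (fun i : Fin (n + 1) => v i.castSucc)) := by
  rw [vdm_succ v, vdm_succ (fun i : Fin (n + 1) => v i.castSucc), Fin.prod_univ_castSucc]
  simp only [Fin.castSucc_zero, Fin.succ_last, Fin.succ_castSucc]
  ring

lemma det_ikMat_submatrix_succ {R : Type*} [CommRing R] (τ : R) {n : ℕ} (u v : Fin (n + 1) → R)
    (p : Fin n → Fin (n + 1)) :
    ((ikMat τ u v).submatrix Fin.succ p).det =
      (∏ j, (u 0 - τ ^ 2 * v (p j)) * (u 0 - v (p j))) *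
        (ikMat τ (fun i => u i.succ) (fun j => v (p j))).det := by
  rw [← Matrix.det_mul_row]
  congr 1
  ext i j
  simp [ikMat, Fin.prod_univ_succ, (Fin.succ_ne_zero i).symm]

lemma det_ikMat_submatrix_castSucc {R : Type*} [CommRing R] (τ : R) {n : ℕ}
    (u v : Fin (n + 1) → R) (p : Fin n → Fin (n + 1)) :
    ((ikMat τ u v).submatrix Fin.castSucc p).det =
      (∏ j, (u (Fin.last n) - τ ^ 2 * v (p j)) * (u (Fin.last n) - v (p j))) *
        (ikMat τ (fun i => u i.castSucc) (fun j => v (p j))).det := by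
  rw [← Matrix.det_mul_row]
  congr 1
  ext i j
  simp [ikMat, Fin.prod_univ_castSucc, (Fin.castSucc_lt_last i).ne', mul_comm]

lemma det_ikMat_submatrix_mid {R : Type*} [CommRing R] (τ : R) {n : ℕ}
    (u v : Fin (n + 2) → R) :
    ((ikMat τ u v).submatrix (fun i : Fin n => i.castSucc.succ)
        (fun i : Fin n => i.castSucc.succ)).det =
      (∏ j : Fin n, (u 0 - τ ^ 2 * v j.castSucc.succ) * (u 0 - v j.castSucc.succ)) *
      (∏ j : Fin n, (u (Fin.last (n + 1)) - τ ^ 2 * v j.castSucc.succ) *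
        (u (Fin.last (n + 1)) - v j.castSucc.succ)) *
        (ikMat τ (fun i : Fin n => u i.castSucc.succ)
          (fun j : Fin n => v j.castSucc.succ)).det := by
  rw [mul_assoc, ← Matrix.det_mul_row, ← Matrix.det_mul_row]
  congr 1
  ext i j
  have h : Fin.last n ≠ i.castSucc := (Fin.castSucc_lt_last i).ne'
  simp only [ikMat, Matrix.submatrix_apply, Matrix.of_apply, Fin.prod_univ_succ (n := n + 1),
    Fin.prod_univ_castSucc (n := n), (Fin.succ_ne_zero _).symm, if_false, Fin.succ_inj, h,
    Fin.castSucc_inj, ← Fin.succ_last]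
  ring

lemma sixV_bilinear_of_generic {R : Type*} [CommRing R] [IsDomain R] (τ : R) {n : ℕ}
    (u v : Fin (n + 2) → R) (hu : Function.Injective u) (hv : Function.Injective v)
    (huv : ∀ i j, u i ≠ v j) (hτ : ∀ i j, i ≠ j → u i - τ ^ 2 * u j ≠ 0)
    (hτ' : ∀ i j, u i - τ ^ 2 * v j ≠ 0) :
    (u (Fin.last (n + 1)) - u 0) * (v 0 - v (Fin.last (n + 1))) *
        (sixV τ u v 0 *
          sixV τ (fun i : Fin n => u i.castSucc.succ) (fun j : Fin n => v j.castSucc.succ) 0) =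
      (u 0 - τ ^ 2 * v (Fin.last (n + 1))) * (u 0 - v (Fin.last (n + 1))) *
          ((u (Fin.last (n + 1)) - τ ^ 2 * v 0) * (u (Fin.last (n + 1)) - v 0)) *
        (sixV τ (fun i : Fin (n + 1) => u i.succ) (fun j : Fin (n + 1) => v j.succ) 0 *
          sixV τ (fun i : Fin (n + 1) => u i.castSucc) (fun j : Fin (n + 1) => v j.castSucc) 0) -
      (u 0 - τ ^ 2 * v 0) * (u 0 - v 0) * ((u (Fin.last (n + 1)) - τ ^ 2 * v (Fin.last (n + 1))) *
          (u (Fin.last (n + 1)) - v (Fin.last (n + 1)))) *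
        (sixV τ (fun i : Fin (n + 1) => u i.succ) (fun j : Fin (n + 1) => v j.castSucc) 0 *
          sixV τ (fun i : Fin (n + 1) => u i.castSucc) (fun j : Fin (n + 1) => v j.succ) 0) := by
  have ik {m : ℕ} (p q : Fin m → Fin (n + 2)) (hp : Function.Injective p)
      (hq : Function.Injective q) :=
    izerginKorepin τ (fun i => u (p i)) (fun j => v (q j)) (hu.comp hp) (hv.comp hq)
      (fun _ _ => huv _ _) (fun i j hij => hτ _ _ (hp.ne hij))
  have hs : Function.Injective (Fin.succ : Fin (n + 1) → Fin (n + 2)) := Fin.succ_injective _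
  have hc : Function.Injective (Fin.castSucc : Fin (n + 1) → Fin (n + 2)) :=
    Fin.castSucc_injective _
  have hm : Function.Injective (fun i : Fin n => i.castSucc.succ) :=
    hs.comp (Fin.castSucc_injective _)
  have key := desnanotJacobi (ikMat τ u v)
  rw [det_ikMat_submatrix_mid, det_ikMat_submatrix_succ, det_ikMat_submatrix_succ,
    det_ikMat_submatrix_castSucc, det_ikMat_submatrix_castSucc, ← ik _ _ hs hs, ← ik _ _ hs hc,
    ← ik _ _ hc hs, ← ik _ _ hc hc, ← ik _ _ hm hm,
    ← ik (fun i => i) (fun i => i) Function.injective_id Function.injective_id] at key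
  simp only [Fin.prod_univ_castSucc (n := n) (f := fun j => _ * (_ - v j.succ)),
    Fin.prod_univ_succ (n := n) (f := fun j => _ * (_ - v j.castSucc)), Fin.castSucc_zero,
    Fin.succ_last, ← Fin.succ_castSucc, Nat.succ_eq_add_one] at key
  have hΔu := vdm_desnanotJacobi u
  have hΔv := vdm_desnanotJacobi (fun j => -v j)
  have hne : (∏ j : Fin n, (u 0 - τ ^ 2 * v j.castSucc.succ) * (u 0 - v j.castSucc.succ)) *
      (∏ j : Fin n, (u (Fin.last (n + 1)) - τ ^ 2 * v j.castSucc.succ) *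
        (u (Fin.last (n + 1)) - v j.castSucc.succ)) *
      (vdm (fun i : Fin (n + 1) => u i.succ) * vdm (fun i : Fin (n + 1) => u i.castSucc)) *
      (vdm (fun j : Fin (n + 1) => -v j.succ) *
        vdm (fun j : Fin (n + 1) => -v j.castSucc)) ≠ 0 := by
    have hnv := neg_injective.comp hv
    refine mul_ne_zero (mul_ne_zero (mul_ne_zero ?_ ?_) (mul_ne_zero ?_ ?_)) (mul_ne_zero ?_ ?_)
    · exact Finset.prod_ne_zero_iff.2 fun j _ => mul_ne_zero (hτ' _ _) (sub_ne_zero.2 (huv _ _))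
    · exact Finset.prod_ne_zero_iff.2 fun j _ => mul_ne_zero (hτ' _ _) (sub_ne_zero.2 (huv _ _))
    · exact vdm_ne_zero (hu.comp hs)
    · exact vdm_ne_zero (hu.comp hc)
    · exact vdm_ne_zero (hnv.comp hs)
    · exact vdm_ne_zero (hnv.comp hc)
  apply mul_left_cancel₀ hne
  linear_combination key -
    (∏ j : Fin n, (u 0 - τ ^ 2 * v j.castSucc.succ) * (u 0 - v j.castSucc.succ)) *
      (∏ j : Fin n, (u (Fin.last (n + 1)) - τ ^ 2 * v j.castSucc.succ) *
        (u (Fin.last (n + 1)) - v j.castSucc.succ)) * sixV τ u v 0 *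
      sixV τ (fun i : Fin n => u i.castSucc.succ) (fun j : Fin n => v j.castSucc.succ) 0 *
      (vdm (fun j => -v j) * vdm (fun j : Fin n => -v j.castSucc.succ) * hΔu +
        (u (Fin.last (n + 1)) - u 0) * (vdm (fun i : Fin (n + 1) => u i.succ) *
          vdm (fun i : Fin (n + 1) => u i.castSucc)) * hΔv)

/-- The bilinear identity that the Desnanot–Jacobi identity gives for the partition function. -/
lemma sixV_bilinear {R : Type*} [CommRing R] (τ : R) {n : ℕ} (u v : Fin (n + 2) → R) :
    (u (Fin.last (n + 1)) - u 0) * (v 0 - v (Fin.last (n + 1))) *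
        (sixV τ u v 0 *
          sixV τ (fun i : Fin n => u i.castSucc.succ) (fun j : Fin n => v j.castSucc.succ) 0) =
      (u 0 - τ ^ 2 * v (Fin.last (n + 1))) * (u 0 - v (Fin.last (n + 1))) *
          ((u (Fin.last (n + 1)) - τ ^ 2 * v 0) * (u (Fin.last (n + 1)) - v 0)) *
        (sixV τ (fun i : Fin (n + 1) => u i.succ) (fun j : Fin (n + 1) => v j.succ) 0 *
          sixV τ (fun i : Fin (n + 1) => u i.castSucc) (fun j : Fin (n + 1) => v j.castSucc) 0) -
      (u 0 - τ ^ 2 * v 0) * (u 0 - v 0) * ((u (Fin.last (n + 1)) - τ ^ 2 * v (Fin.last (n + 1))) *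
          (u (Fin.last (n + 1)) - v (Fin.last (n + 1)))) *
        (sixV τ (fun i : Fin (n + 1) => u i.succ) (fun j : Fin (n + 1) => v j.castSucc) 0 *
          sixV τ (fun i : Fin (n + 1) => u i.castSucc) (fun j : Fin (n + 1) => v j.succ) 0) := by
  let X : Option (Fin (n + 2) ⊕ Fin (n + 2)) →
    MvPolynomial (Option (Fin (n + 2) ⊕ Fin (n + 2))) ℤ := MvPolynomial.X
  have hX : Function.Injective X := MvPolynomial.X_injective
  have hne (a b : Option (Fin (n + 2) ⊕ Fin (n + 2))) (ha : a ≠ none) :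
      X a - X none ^ 2 * X b ≠ 0 := by
    intro h
    have := congrArg (MvPolynomial.aeval (fun c => if c = none then (0 : ℤ) else 1)) h
    simp [X, ha] at this
  have key := sixV_bilinear_of_generic (X none) (fun i => X (some (Sum.inl i)))
    (fun j => X (some (Sum.inr j)))
    (fun i j h => by simpa using hX h) (fun i j h => by simpa using hX h)
    (fun i j h => by simpa using hX h) (fun i j _ => hne _ _ (by simp))
    (fun i j => hne _ _ (by simp))
  have key' := congrArg (MvPolynomial.eval₂Hom (Int.castRingHom R)
    (fun c : Option (Fin (n + 2) ⊕ Fin (n + 2)) => c.elim τ (Sum.elim u v))) key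
  simpa only [X, map_sub, map_mul, map_pow, map_sixV, MvPolynomial.coe_eval₂Hom,
    MvPolynomial.eval₂_X, Option.elim_some, Option.elim_none, Sum.elim_inl, Sum.elim_inr] using key'

/-- The sum of the values of `f` strictly before `j`. -/
def before {n : ℕ} (f : Fin n → ℤ) (j : Fin n) : ℤ :=
  ∑ j', if j' < j then f j' else 0

lemma sum_filter_le {n : ℕ} (f : Fin n → ℤ) (j : Fin n) :
    ∑ j' ∈ univ.filter (fun j' : Fin n => j' ≤ j), f j' = before f j + f j := by
  have h : univ.filter (fun j' : Fin n => j' ≤ j) =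
      insert j (univ.filter (fun j' : Fin n => j' < j)) := by
    ext k
    simp [le_iff_eq_or_lt]
  rw [h, Finset.sum_insert (by simp), Finset.sum_filter, add_comm]
  rfl

lemma forall_sum_filter_le_iff {n : ℕ} (f : Fin n → ℤ) :
    (∀ j, (∑ j' ∈ univ.filter (fun j' : Fin n => j' ≤ j), f j') = 0 ∨
      (∑ j' ∈ univ.filter (fun j' : Fin n => j' ≤ j), f j') = 1) ↔
    ∀ j, (before f j = 0 ∨ before f j = 1) ∧ (before f j + f j = 0 ∨ before f j + f j = 1) := by
  refine ⟨fun h j => ⟨?_, ?_⟩, fun h j => ?_⟩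
  · by_cases hj : j.val = 0
    · left
      refine Finset.sum_eq_zero fun k _ => if_neg ?_
      rw [Fin.lt_def]
      omega
    · have h1 := h ⟨j.val - 1, by omega⟩
      have h2 : univ.filter (fun j' : Fin n => j' ≤ ⟨j.val - 1, by omega⟩) =
          univ.filter (fun j' : Fin n => j' < j) := by
        ext k
        simp only [Finset.mem_filter, Finset.mem_univ, true_and, Fin.lt_def, Fin.le_def]
        omega
      rwa [h2, Finset.sum_filter] at h1
  · rw [← sum_filter_le]
    exact h j
  · rw [sum_filter_le]
    exact (h j).2

/-- The six admissible configurations at a site. -/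
def Adm (h v x : ℤ) : Prop :=
  ((h = 0 ∨ h = 1) ∧ (h + x = 0 ∨ h + x = 1)) ∧ ((v = 0 ∨ v = 1) ∧ (v + x = 0 ∨ v + x = 1))

lemma ent_cases (x : Fin 3) : ent x = -1 ∨ ent x = 0 ∨ ent x = 1 := by
  fin_cases x <;> simp [ent]

lemma adm_cases {h v x : ℤ} (H : Adm h v x) :
    (h = 0 ∧ v = 0 ∧ x = 0) ∨ (h = 0 ∧ v = 0 ∧ x = 1) ∨ (h = 1 ∧ v = 1 ∧ x = 0) ∨
      (h = 1 ∧ v = 1 ∧ x = -1) ∨ (h = 0 ∧ v = 1 ∧ x = 0) ∨ (h = 1 ∧ v = 0 ∧ x = 0) := by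
  unfold Adm at H
  omega

lemma vtx_eq_zero_of_not_adm {R : Type*} [Zero R] (a b c d : R) {h v x : ℤ}
    (H : ¬ Adm h v x) : vtx a b c d h v x = 0 := by
  unfold vtx
  unfold Adm at H
  split_ifs <;> first | rfl | (exfalso; omega)

lemma isASM_iff {n : ℕ} (e : Fin n → Fin n → Fin 3) :
    IsASM (asmMat e) ↔ ((∀ i, ∑ j, ent (e i j) = 1) ∧ (∀ j, ∑ i, ent (e i j) = 1)) ∧
      ∀ i j, Adm (before (fun j' => ent (e i j')) j) (before (fun i' => ent (e i' j)) i)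
        (ent (e i j)) := by
  have h1 := fun i => forall_sum_filter_le_iff (fun j' => ent (e i j'))
  have h2 := fun j => forall_sum_filter_le_iff (fun i' => ent (e i' j))
  constructor
  · rintro ⟨-, hr, hc, hr', hc'⟩
    exact ⟨⟨hr', hc'⟩, fun i j => ⟨(h1 i).1 (hr i) j, (h2 j).1 (fun i => hc i j) i⟩⟩
  · rintro ⟨⟨hr', hc'⟩, H⟩
    exact ⟨fun i j => ent_cases _, fun i => (h1 i).2 fun j => (H i j).1,
      fun i j => (h2 j).2 (fun i => (H i j).2) i, hr', hc'⟩

open Classical in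
lemma part_eq_sum_asm {R : Type*} [CommRing R] {n : ℕ} (a b c d : Fin n → Fin n → R) :
    part (fun i j => vtx (a i j) (b i j) (c i j) (d i j)) 0 =
      ∑ e : Fin n → Fin n → Fin 3, if IsASM (asmMat e) then
        ∏ i, ∏ j, vtx (a i j) (b i j) (c i j) (d i j) (before (fun j' => ent (e i j')) j)
          (before (fun i' => ent (e i' j)) i) (ent (e i j)) else 0 := by
  unfold part
  refine Finset.sum_congr rfl fun e _ => ?_
  rw [isASM_iff]
  simp only [Pi.zero_apply, zero_add]
  by_cases hs : (∀ i, ∑ j, ent (e i j) = 1) ∧ (∀ j, ∑ i, ent (e i j) = 1)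
  · by_cases ha : ∀ i j, Adm (before (fun j' => ent (e i j')) j)
        (before (fun i' => ent (e i' j)) i) (ent (e i j))
    · rw [if_pos hs, if_pos ⟨hs, ha⟩]
      rfl
    · rw [if_pos hs, if_neg fun H => ha H.2]
      push Not at ha
      obtain ⟨i, j, hij⟩ := ha
      exact Finset.prod_eq_zero (Finset.mem_univ i) (Finset.prod_eq_zero (Finset.mem_univ j)
        (vtx_eq_zero_of_not_adm _ _ _ _ hij))
  · rw [if_neg hs, if_neg fun H => hs H.1]

lemma before_zero {n : ℕ} (f : Fin (n + 1) → ℤ) : before f 0 = 0 := by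
  simp [before]

lemma before_last {n : ℕ} (f : Fin (n + 1) → ℤ) :
    before f (Fin.last n) + f (Fin.last n) = ∑ j, f j := by
  simp [before, Fin.sum_univ_castSucc]

lemma before_nonneg {n : ℕ} {f : Fin n → ℤ} (hf : ∀ j, 0 ≤ f j) (j : Fin n) : 0 ≤ before f j :=
  Finset.sum_nonneg fun k _ => by split_ifs <;> simp [hf]

lemma before_add_le {n : ℕ} {f : Fin n → ℤ} (hf : ∀ j, 0 ≤ f j) {i j : Fin n} (hij : i < j) :
    before f i + f i ≤ before f j := by
  rw [← sum_filter_le]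
  unfold before
  rw [← Finset.sum_filter]
  refine Finset.sum_le_sum_of_subset_of_nonneg ?_ fun k _ _ => hf k
  intro k
  simp only [Finset.mem_filter, Finset.mem_univ, true_and]
  exact fun h => h.trans_lt hij

lemma exists_pos_of_before_pos {n : ℕ} {f : Fin n → ℤ} {j : Fin n} (h : 0 < before f j) :
    ∃ i < j, 0 < f i := by
  by_contra! hcon
  refine absurd h (not_lt_of_ge (Finset.sum_nonpos fun k _ => ?_))
  split_ifs with hk
  · exact hcon k hk
  · rfl

lemma exists_pos_of_before_add_lt {n : ℕ} {f : Fin n → ℤ} {j : Fin n}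
    (h : before f j + f j < ∑ i, f i) : ∃ i > j, 0 < f i := by
  by_contra! hcon
  refine absurd h (not_lt_of_ge ?_)
  rw [← sum_filter_le, ← Finset.sum_filter_add_sum_filter_not univ (fun i => i ≤ j)]
  simp only [add_le_iff_nonpos_right]
  refine Finset.sum_nonpos fun k hk => hcon k ?_
  simpa using hk

/-- The sites of `A` which carry the six-vertex weight `a`. -/
def IsFlat {n : ℕ} (A : Fin n → Fin n → ℤ) (i j : Fin n) : Prop :=
  A i j = 0 ∧ before (A i) j = before (fun i' => A i' j) i

instance {n : ℕ} (A : Fin n → Fin n → ℤ) (i j : Fin n) : Decidable (IsFlat A i j) :=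
  inferInstanceAs (Decidable (_ ∧ _))

lemma sum_inversions {n : ℕ} (A : Fin n → Fin n → ℤ) :
    (∑ i : Fin n, ∑ i' : Fin n, ∑ j : Fin n, ∑ j' : Fin n,
      if i < i' ∧ j' ≤ j then A i j * A i' j' else 0) =
    ∑ i, ∑ j, before (fun i' => A i' j) i * (before (A i) j + A i j) := by
  rw [Finset.sum_comm]
  refine Finset.sum_congr rfl fun i' _ => ?_
  rw [Finset.sum_comm]
  refine Finset.sum_congr rfl fun j _ => ?_
  rw [← sum_filter_le, before, Finset.sum_mul, Finset.sum_filter]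
  refine Finset.sum_congr rfl fun i _ => ?_
  rw [Finset.mul_sum]
  refine Finset.sum_congr rfl fun j' _ => ?_
  by_cases h1 : i < i' <;> by_cases h2 : j' ≤ j <;> simp [h1, h2]

lemma sum_sum_before {n : ℕ} (A : Fin n → Fin n → ℤ) (hc : ∀ j, ∑ i, A i j = 1) :
    ∑ i, ∑ j, before (A i) j = ∑ j : Fin n, ∑ j' : Fin n, if j' < j then 1 else 0 := by
  unfold before
  rw [Finset.sum_comm]
  refine Finset.sum_congr rfl fun j _ => ?_
  rw [Finset.sum_comm]
  refine Finset.sum_congr rfl fun j' _ => ?_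
  by_cases h : j' < j <;> simp [h, hc]

lemma sum_one_sub_edges {n : ℕ} (A : Fin n → Fin n → ℤ) (hr : ∀ i, ∑ j, A i j = 1)
    (hc : ∀ j, ∑ i, A i j = 1) :
    ∑ i, ∑ j, (1 - before (A i) j - before (fun i' => A i' j) i - A i j) = 0 := by
  have hv : ∑ i, ∑ j, before (fun i' => A i' j) i =
      ∑ i : Fin n, ∑ i' : Fin n, if i < i' then 1 else 0 := by
    rw [Finset.sum_comm, sum_sum_before (fun j i => A i j) hr, Finset.sum_comm]
  have hA : ∑ i, ∑ j, A i j = ∑ i : Fin n, ∑ j : Fin n, if i = j then (1 : ℤ) else 0 := by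
    simp [hr]
  simp only [Finset.sum_sub_distrib]
  rw [sum_sum_before A hc, hv, hA]
  simp only [← Finset.sum_sub_distrib]
  refine Finset.sum_eq_zero fun i _ => Finset.sum_eq_zero fun j _ => ?_
  rcases lt_trichotomy i j with h | h | h
  · simp [h, h.ne, h.le.not_gt]
  · simp [h]
  · simp [h, h.ne', h.le.not_gt]

lemma card_isFlat {n : ℕ} (A : Fin n → Fin n → ℤ) (hr : ∀ i, ∑ j, A i j = 1)
    (hc : ∀ j, ∑ i, A i j = 1)
    (hA : ∀ i j, Adm (before (A i) j) (before (fun i' => A i' j) i) (A i j)) :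
    (univ.filter fun p : Fin n × Fin n => IsFlat A p.1 p.2).card = 2 * nuASM A := by
  zify
  unfold nuASM
  rw [sum_inversions, Int.toNat_of_nonneg]
  · rw [Finset.card_filter, Fintype.sum_prod_type, ← add_zero (2 * _),
      ← sum_one_sub_edges A hr hc, Finset.mul_sum, ← Finset.sum_add_distrib]
    push_cast
    refine Finset.sum_congr rfl fun i _ => ?_
    rw [Finset.mul_sum, ← Finset.sum_add_distrib]
    refine Finset.sum_congr rfl fun j _ => ?_
    unfold IsFlat
    rcases adm_cases (hA i j) with h | h | h | h | h | h <;> obtain ⟨h1, h2, h3⟩ := h <;>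
      simp [h1, h2, h3]
  · refine Finset.sum_nonneg fun i _ => Finset.sum_nonneg fun j _ => ?_
    rcases adm_cases (hA i j) with h | h | h | h | h | h <;> obtain ⟨h1, h2, h3⟩ := h <;>
      simp [h1, h2, h3]

lemma card_isFlat_top {n : ℕ} (A : Fin (n + 1) → Fin (n + 1) → ℤ) (hr : ∀ i, ∑ j, A i j = 1)
    (hA : ∀ i j, Adm (before (A i) j) (before (fun i' => A i' j) i) (A i j)) :
    (univ.filter fun j => IsFlat A 0 j).card = rhoT A := by
  unfold rhoT
  congr 1
  refine Finset.filter_congr fun j _ => ?_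
  change (A 0 j = 0 ∧ before (A 0) j = before (fun i' => A i' j) 0) ↔
    A 0 j = 0 ∧ ∃ j', j < j' ∧ A 0 j' = 1
  have hnn (j) : 0 ≤ A 0 j := by
    have := hA 0 j
    rw [before_zero] at this
    unfold Adm at this
    omega
  have hle (j) : A 0 j ≤ 1 := by
    have := hA 0 j
    unfold Adm at this
    omega
  rw [before_zero]
  refine and_congr_right fun h0 => ⟨fun h => ?_, fun ⟨j', hj, h⟩ => ?_⟩
  · obtain ⟨j', hj, h'⟩ := exists_pos_of_before_add_lt (f := A 0) (j := j) (by
      rw [h, h0, hr]; norm_num)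
    exact ⟨j', hj, by have := hle j'; omega⟩
  · have h1 := before_add_le hnn hj
    have h2 := before_nonneg hnn j
    have h3 := hA 0 j'
    unfold Adm at h3
    omega

lemma card_isFlat_right {n : ℕ} (A : Fin (n + 1) → Fin (n + 1) → ℤ) (hr : ∀ i, ∑ j, A i j = 1)
    (hA : ∀ i j, Adm (before (A i) j) (before (fun i' => A i' j) i) (A i j)) :
    (univ.filter fun i => IsFlat A i (Fin.last n)).card = rhoR A := by
  unfold rhoR
  congr 1
  refine Finset.filter_congr fun i _ => ?_
  change (A i (Fin.last n) = 0 ∧ before (A i) (Fin.last n) =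
    before (fun i' => A i' (Fin.last n)) i) ↔
    A i (Fin.last n) = 0 ∧ ∃ i', i' < i ∧ A i' (Fin.last n) = 1
  have hl (i) := (before_last (A i)).trans (hr i)
  have hnn (i) : 0 ≤ A i (Fin.last n) := by
    have := hA i (Fin.last n)
    have := hl i
    unfold Adm at *
    omega
  have hle (i) : A i (Fin.last n) ≤ 1 := by
    have := hA i (Fin.last n)
    unfold Adm at this
    omega
  refine and_congr_right fun h0 => ⟨fun h => ?_, fun ⟨i', hi, h⟩ => ?_⟩
  · have h1 := hl i
    obtain ⟨i', hi, h'⟩ := exists_pos_of_before_pos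
      (f := fun i' => A i' (Fin.last n)) (j := i) (by omega)
    exact ⟨i', hi, by have := hle i'; omega⟩
  · have h1 := before_add_le hnn hi
    have h2 := before_nonneg hnn i'
    have h3 := hA i (Fin.last n)
    have h4 := hl i
    unfold Adm at h3
    omega

lemma prod_ite_eq_pow_card {ι R : Type*} [Fintype ι] [CommMonoid R] (P : ι → Prop) [DecidablePred P]
    (a : R) : ∏ i, (if P i then a else 1) = a ^ (univ.filter P).card := by
  rw [← Finset.prod_filter, Finset.prod_const]

lemma prod_prod_ite_eq_pow_card {ι R : Type*} [Fintype ι] [CommMonoid R] (P : ι → ι → Prop)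
    [∀ i j, Decidable (P i j)] (a : R) :
    ∏ i, ∏ j, (if P i j then a else 1) =
      a ^ (univ.filter fun p : ι × ι => P p.1 p.2).card := by
  rw [← prod_ite_eq_pow_card, Fintype.prod_prod_type]

/-- The six-vertex partition function whose first row and last column carry the extra fugacities
`z1` and `z2` is the generating function of alternating sign matrices. -/
lemma part_eq_Zqua {R : Type*} [CommRing R] (n : ℕ) (α y z1 z2 : R) :
    part (fun i j : Fin n => vtx (α * (if i.val = 0 then z1 else 1) *
      (if j.val + 1 = n then z2 else 1)) 1 1 y) 0 = Zqua n (α ^ 2) y z1 z2 1 1 := by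
  classical
  rw [part_eq_sum_asm]
  unfold Zqua
  refine Finset.sum_congr rfl fun e _ => ?_
  by_cases hasm : IsASM (asmMat e)
  · rw [if_pos hasm, if_pos hasm]
    obtain ⟨⟨hr, hc⟩, hA⟩ := (isASM_iff e).1 hasm
    have hterm (i j : Fin n) : vtx (α * (if i.val = 0 then z1 else 1) *
        (if j.val + 1 = n then z2 else 1)) 1 1 y (before (fun j' => ent (e i j')) j)
          (before (fun i' => ent (e i' j)) i) (ent (e i j)) =
        (if IsFlat (asmMat e) i j then α else 1) * (if asmMat e i j = -1 then y else 1) *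
        (if IsFlat (asmMat e) i j then (if i.val = 0 then z1 else 1) else 1) *
        (if IsFlat (asmMat e) i j then (if j.val + 1 = n then z2 else 1) else 1) := by
      have hF : IsFlat (asmMat e) i j ↔ ent (e i j) = 0 ∧ before (fun j' => ent (e i j')) j =
          before (fun i' => ent (e i' j)) i := Iff.rfl
      have hm : asmMat e i j = ent (e i j) := rfl
      simp only [hF, hm]
      rcases adm_cases (hA i j) with h | h | h | h | h | h <;> obtain ⟨h1, h2, h3⟩ := h <;>
        simp [h1, h2, h3, vtx]
    simp only [hterm, Finset.prod_mul_distrib, prod_prod_ite_eq_pow_card]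
    rw [card_isFlat (asmMat e) hr hc hA, one_pow, one_pow, mul_one, mul_one, ← pow_mul]
    congr 1
    · congr 1
      cases n with
      | zero => simp [rhoT]
      | succ n =>
        rw [← card_isFlat_top (asmMat e) hr hA, Fin.prod_univ_succ]
        simp [prod_ite_eq_pow_card]
    · cases n with
      | zero => simp [rhoR]
      | succ n =>
        rw [← card_isFlat_right (asmMat e) hr hA, Finset.prod_comm, Fin.prod_univ_castSucc]
        have hne (j : Fin n) : j.val ≠ n := j.isLt.ne
        simp [prod_ite_eq_pow_card, hne]
  · rw [if_neg hasm, if_neg hasm]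

lemma before_rev {n : ℕ} (f : Fin n → ℤ) (j : Fin n) :
    before (fun j' => f j'.rev) j = ∑ j', f j' - before f j.rev - f j.rev := by
  have h : before (fun j' => f j'.rev) j = ∑ j', if ¬ j' ≤ j.rev then f j' else 0 := by
    unfold before
    rw [← Equiv.sum_comp Fin.revPerm (fun j' => if ¬ j' ≤ j.rev then f j' else 0)]
    refine Finset.sum_congr rfl fun j' _ => ?_
    simp [Fin.rev_le_rev]
  rw [h, sub_sub, ← sum_filter_le, ← Finset.sum_filter, eq_sub_iff_add_eq, add_comm,
    Finset.sum_filter_add_sum_filter_not]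

lemma vtx_reflect {R : Type*} [Zero R] (a b c d : R) (h v e : ℤ) :
    vtx a b c d (1 - v - e) (1 - h - e) e = vtx a b c d h v e := by
  unfold vtx
  split_ifs <;> first | rfl | (exfalso; omega)

lemma prod_prod_rev {M : Type*} [CommMonoid M] {n : ℕ} (f : Fin n → Fin n → M) :
    ∏ i, ∏ j, f (Fin.rev j) (Fin.rev i) = ∏ i, ∏ j, f i j := by
  rw [Finset.prod_comm]
  exact (Equiv.prod_comp Fin.revPerm (fun i => ∏ j, f i (Fin.rev j))).trans
    (Finset.prod_congr rfl fun i _ => Equiv.prod_comp Fin.revPerm (f i))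

/-- Reflection in the antidiagonal. -/
lemma part_reflect {R : Type*} [CommRing R] {n : ℕ} (a b c d : Fin n → Fin n → R) :
    part (fun i j => vtx (a (Fin.rev j) (Fin.rev i)) (b (Fin.rev j) (Fin.rev i))
      (c (Fin.rev j) (Fin.rev i)) (d (Fin.rev j) (Fin.rev i))) 0 =
    part (fun i j => vtx (a i j) (b i j) (c i j) (d i j)) 0 := by
  have hinv : Function.Involutive
      (fun (e : Fin n → Fin n → Fin 3) (i j : Fin n) => e (Fin.rev j) (Fin.rev i)) := by
    intro e
    simp
  unfold part
  rw [← Equiv.sum_comp hinv.toPerm]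
  refine Finset.sum_congr rfl fun e _ => ?_
  have hcond : ((∀ i : Fin n, ∑ j, ent (e (Fin.rev j) (Fin.rev i)) = 1) ∧
      ∀ j : Fin n, (0 : Fin n → ℤ) j + ∑ i, ent (e (Fin.rev j) (Fin.rev i)) = 1) ↔
      (∀ i, ∑ j, ent (e i j) = 1) ∧ ∀ j, (0 : Fin n → ℤ) j + ∑ i, ent (e i j) = 1 := by
    have h1 (i : Fin n) : ∑ j, ent (e (Fin.rev j) i) = ∑ j, ent (e j i) :=
      Equiv.sum_comp Fin.revPerm (fun j => ent (e j i))
    have h2 (i : Fin n) : ∑ j, ent (e i (Fin.rev j)) = ∑ j, ent (e i j) :=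
      Equiv.sum_comp Fin.revPerm (fun j => ent (e i j))
    simp only [h1, h2, Pi.zero_apply, zero_add]
    rw [and_comm]
    exact and_congr ⟨fun h i => by simpa using h (Fin.rev i), fun h i => h _⟩
      ⟨fun h i => by simpa using h (Fin.rev i), fun h i => h _⟩
  simp only [Function.Involutive.coe_toPerm, hcond]
  split_ifs with hs
  · obtain ⟨hr, hc⟩ := hs
    simp only [Pi.zero_apply, zero_add] at hc ⊢
    refine Eq.trans ?_ (prod_prod_rev _)
    refine Finset.prod_congr rfl fun i _ => Finset.prod_congr rfl fun j _ => ?_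
    have h1 := before_rev (fun i' => ent (e i' (Fin.rev i))) j
    have h2 := before_rev (fun j' => ent (e (Fin.rev j) j')) i
    rw [hc] at h1
    rw [hr] at h2
    simp only [before] at h1 h2
    rw [h1, h2, vtx_reflect]
  · rfl

lemma Zqua_right_eq_top {R : Type*} [CommRing R] (n : ℕ) (α y z : R) :
    Zqua n (α ^ 2) y 1 z 1 1 = Zqua n (α ^ 2) y z 1 1 1 := by
  rw [← part_eq_Zqua, ← part_eq_Zqua, ← part_reflect]
  congr 1
  funext i j
  have h : ((Fin.rev i).val + 1 = n) = (i.val = 0) := by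
    rw [Fin.val_rev]
    ext
    omega
  simp only [h, ite_self, mul_one]

lemma map_Zqua {R S : Type*} [CommRing R] [CommRing S] (φ : R →+* S) (n : ℕ)
    (x y z1 z2 z3 z4 : R) :
    φ (Zqua n x y z1 z2 z3 z4) = Zqua n (φ x) (φ y) (φ z1) (φ z2) (φ z3) (φ z4) := by
  classical
  unfold Zqua
  simp only [map_sum, apply_ite φ, map_mul, map_pow, map_zero]

lemma prod_zpow_eq_zpow_sum {ι K : Type*} [Fintype ι] [Field K] {g : K} (hg : g ≠ 0)
    (f : ι → ℤ) : ∏ i, g ^ f i = g ^ ∑ i, f i := by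
  classical
  induction (univ : Finset ι) using Finset.induction_on with
  | empty => simp
  | insert a s ha ih => rw [Finset.prod_insert ha, Finset.sum_insert ha, zpow_add₀ hg, ih]

lemma vtx_gauge {K : Type*} [Field K] {a b c d a' b' c' d' t g : K} (hg : g ≠ 0) {h v e : ℤ}
    (ha : e = 0 → h = v → a = t * a') (hb : b = t * b') (hc : c = t * g * c')
    (hd : v = 1 → h + e = 0 → d * g = t * d') :
    vtx a b c d h v e = t * g ^ e * vtx a' b' c' d' h v e := by
  by_cases H : Adm h v e
  · rcases adm_cases H with h | h | h | h | h | h <;> obtain ⟨rfl, rfl, rfl⟩ := h <;>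
      simp_all [vtx, mul_assoc]
    rw [mul_left_comm, ← hd]
    field_simp
  · rw [vtx_eq_zero_of_not_adm _ _ _ _ H, vtx_eq_zero_of_not_adm _ _ _ _ H, mul_zero]

/-- Gauge transformation of the weights: the top row and the right column see no `d`, and the
corner sees no `a`. -/
lemma part_gauge {K : Type*} [Field K] {k m : ℕ}
    {a b c d a' b' c' d' t : Fin (k + 1) → Fin (m + 1) → K} {g : Fin (k + 1) → K}
    {κ : Fin (m + 1) → K} (hg : ∀ i, g i ≠ 0) (hκ : ∀ j, κ j ≠ 0)
    (ha : ∀ i j, i ≠ 0 ∨ j ≠ Fin.last m → a i j = t i j * a' i j)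
    (hb : ∀ i j, b i j = t i j * b' i j)
    (hc : ∀ i j, c i j = t i j * (g i * κ j) * c' i j)
    (hd : ∀ i j, i ≠ 0 → j ≠ Fin.last m → d i j * (g i * κ j) = t i j * d' i j) :
    part (fun i j => vtx (a i j) (b i j) (c i j) (d i j)) 0 =
      (∏ i, ∏ j, t i j) * (∏ i, g i) * (∏ j, κ j) *
        part (fun i j => vtx (a' i j) (b' i j) (c' i j) (d' i j)) 0 := by
  unfold part
  rw [Finset.mul_sum]
  refine Finset.sum_congr rfl fun e _ => ?_
  simp only [Pi.zero_apply, zero_add]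
  split_ifs with hs
  · obtain ⟨hr, hcol⟩ := hs
    have hterm (i j) := vtx_gauge (a := a i j) (b := b i j) (c := c i j) (d := d i j)
      (a' := a' i j) (b' := b' i j) (c' := c' i j) (d' := d' i j) (t := t i j)
      (h := before (fun j' => ent (e i j')) j) (v := before (fun i' => ent (e i' j)) i)
      (e := ent (e i j)) (mul_ne_zero (hg i) (hκ j)) (fun he h => ha i j (by
        by_contra! hcon
        obtain ⟨rfl, rfl⟩ := hcon
        rw [before_zero] at h
        have h1 := before_last (fun j' => ent (e 0 j'))
        rw [hr, h, he] at h1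
        norm_num at h1)) (hb i j) (hc i j) (fun hv he => hd i j (by
          rintro rfl
          rw [before_zero] at hv
          omega) (by
          rintro rfl
          have h1 := before_last (fun j' => ent (e i j'))
          rw [hr] at h1
          omega))
    unfold before at hterm
    simp only [hterm, Finset.prod_mul_distrib, mul_zpow]
    rw [Finset.prod_comm (f := fun i j => κ j ^ ent (e i j))]
    simp only [prod_zpow_eq_zpow_sum (hg _), prod_zpow_eq_zpow_sum (hκ _), hr, hcol, zpow_one]
    ring
  · rw [mul_zero]

section Refined

variable {K : Type*} [Field K] {τ α y r us vs z1 z2 : K}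

/-- The six-vertex partition function with one distinguished row and one distinguished column,
in terms of the alternating sign matrix generating functions. -/
lemma sixV_boundary (hβ : τ * (r - 1) ≠ 0) (hs : τ * (us - 1) ≠ 0) (hv : τ * (r - vs) ≠ 0)
    (hsv : τ * (us - vs) ≠ 0) (ha : r - τ ^ 2 = τ * (r - 1) * α)
    (hz1 : us - τ ^ 2 = τ * (us - 1) * (α * z1))
    (hz2 : r - τ ^ 2 * vs = τ * (r - vs) * (α * z2))
    (hd : (1 - τ ^ 2) ^ 2 * r = (τ * (r - 1)) ^ 2 * y) (k : ℕ) :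
    sixV τ (fun i : Fin (k + 1) => if i.val = 0 then us else r)
        (fun j : Fin (k + 1) => if j.val = k then vs else 1) 0 *
        (τ * (us - 1) * (τ * (r - vs)) * (τ * (r - 1)) ^ k) =
      (τ * (us - 1) * (τ * (r - vs))) ^ k * (τ * (r - 1)) ^ (k * k) *
        (τ * (r - 1) * (τ * (us - vs)) * Zbaradj (k + 1) (α ^ 2) y z1 z2 +
          (τ * (us - 1) * (τ * (r - vs)) - τ * (r - 1) * (τ * (us - vs))) *
            (α ^ 2 * z1 * z2) ^ k * Zun k (α ^ 2) y) := by
  obtain ⟨hτ, hβ'⟩ := mul_ne_zero_iff.1 hβ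
  have hs' := right_ne_zero_of_mul hs
  have hv' := right_ne_zero_of_mul hv
  have hsv' := right_ne_zero_of_mul hsv
  have hne (j : Fin k) : j.val ≠ k := j.isLt.ne
  have hlast (j : Fin (k + 1)) (hj : j ≠ Fin.last k) : j.val ≠ k :=
    fun h => hj (Fin.ext h)
  have hzero (i : Fin (k + 1)) (hi : i ≠ 0) : i.val ≠ 0 := fun h => hi (Fin.ext h)
  set δ : K := τ * (us - 1) * (τ * (r - vs)) / (τ * (r - 1) * (τ * (us - vs))) with hδ
  have hgauge := part_gauge (k := k) (m := k)
    (a := fun i j => (if i.val = 0 then us else r) - τ ^ 2 * (if j.val = k then vs else 1))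
    (b := fun i j => τ * ((if i.val = 0 then us else r) - (if j.val = k then vs else 1)))
    (c := fun _ _ => 1)
    (d := fun i j =>
      (1 - τ ^ 2) ^ 2 * (if i.val = 0 then us else r) * (if j.val = k then vs else 1))
    (a' := fun i j => α * (if i.val = 0 then z1 else 1) * (if j.val + 1 = k + 1 then z2 else 1))
    (b' := fun _ _ => 1)
    (c' := fun i j => if i.val = 0 ∧ j.val = k then δ else 1) (d' := fun _ _ => y)
    (t := fun i j => τ * ((if i.val = 0 then us else r) - (if j.val = k then vs else 1)))
    (g := fun i => if i.val = 0 then (τ * (us - 1))⁻¹ else (τ * (r - 1))⁻¹)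
    (κ := fun j => if j.val = k then τ * (r - 1) / (τ * (r - vs)) else 1)
    (fun i => by split_ifs <;> exact inv_ne_zero ‹_›)
    (fun j => by
      split_ifs
      · exact div_ne_zero hβ hv
      · exact one_ne_zero)
    (fun i j hij => by
      by_cases hi : i.val = 0 <;> by_cases hj : j.val = k
      · exact absurd hij (by
          rw [not_or, not_not, not_not]
          exact ⟨Fin.ext hi, Fin.ext hj⟩)
      · simp only [hi, hj, if_true, if_false, add_left_inj, mul_one]
        linear_combination hz1
      · simp only [hi, hj, if_true, if_false, mul_one]
        linear_combination hz2
      · simp only [hi, hj, if_false, add_left_inj, mul_one]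
        linear_combination ha)
    (fun i j => (mul_one _).symm)
    (fun i j => by
      by_cases hi : i.val = 0 <;> by_cases hj : j.val = k <;>
        simp only [hi, hj, if_true, if_false, and_self, and_true, and_false, hδ] <;>
        field_simp)
    (fun i j hi hj => by
      simp only [hzero i hi, hlast j hj, if_false]
      rw [mul_one, hd]
      field_simp)
  have hcorner (δ : K) := part_corner (k := k) (m := k)
    (fun i j => α * (if i.val = 0 then z1 else 1) * (if j.val + 1 = k + 1 then z2 else 1))
    (fun _ _ => 1) (fun i j => if i.val = 0 ∧ j.val = k then δ else 1) (fun _ _ => y)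
  have hδ1 := hcorner δ
  have h1 := hcorner 1
  have hZ := part_eq_Zqua (k + 1) α y z1 z2
  have hU := part_eq_Zqua k α y 1 1
  simp only [ite_self, Fin.val_succ, Fin.val_castSucc, Fin.val_zero, Fin.val_last, add_left_inj,
    hne, and_self, if_true, if_false, mul_one, Nat.succ_ne_zero, false_and, and_false,
    Finset.prod_const, Finset.card_univ, Fintype.card_fin] at hδ1 h1 hZ hU hgauge
  generalize (∑ r : Fin k → Fin 3, _ : K) = T at hδ1 h1
  have hT : ∏ i : Fin (k + 1), ∏ j : Fin (k + 1),
      τ * ((if i.val = 0 then us else r) - (if j.val = k then vs else 1)) =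
      τ * (us - vs) * (τ * (us - 1)) ^ k * ((τ * (r - vs)) * (τ * (r - 1)) ^ k) ^ k := by
    rw [Fin.prod_univ_succ, Fin.prod_univ_castSucc]
    simp only [Fin.prod_univ_castSucc, Fin.val_succ, Fin.val_castSucc, Fin.val_zero, Fin.val_last,
      hne, if_true, if_false, Nat.succ_ne_zero, Finset.prod_const, Finset.card_univ,
      Fintype.card_fin]
    ring
  have hG : ∏ i : Fin (k + 1), (if i.val = 0 then (τ * (us - 1))⁻¹ else (τ * (r - 1))⁻¹) =
      (τ * (us - 1))⁻¹ * ((τ * (r - 1)) ^ k)⁻¹ := by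
    rw [Fin.prod_univ_succ, ← inv_pow]
    simp
  have hK : ∏ j : Fin (k + 1), (if j.val = k then τ * (r - 1) / (τ * (r - vs)) else 1) =
      τ * (r - 1) / (τ * (r - vs)) := by
    rw [Fin.prod_univ_castSucc]
    simp [hne]
  rw [hT, hG, hK, hδ1, hU] at hgauge
  rw [h1, hU] at hZ
  rw [show sixV τ _ _ 0 = _ from hgauge, Zbaradj, ← hZ, Zun]
  clear_value δ
  clear hgauge hZ hδ1 h1 hU hT hG hK
  subst hδ
  have hτ2 : α ^ 2 * z1 * z2 = (α * z1) * (α * z2) := by ring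
  rw [hτ2, mul_pow (α * z1)]
  generalize τ * (us - 1) = A at *
  generalize τ * (r - vs) = B at *
  generalize τ * (r - 1) = C at *
  generalize τ * (us - vs) = D at *
  field_simp
  ring

lemma sixV_boundary_row (hβ : τ * (r - 1) ≠ 0) (hs : τ * (us - 1) ≠ 0)
    (ha : r - τ ^ 2 = τ * (r - 1) * α) (hz1 : us - τ ^ 2 = τ * (us - 1) * (α * z1))
    (hd : (1 - τ ^ 2) ^ 2 * r = (τ * (r - 1)) ^ 2 * y) (k : ℕ) :
    sixV τ (fun i : Fin (k + 1) => if i.val = 0 then us else r) (fun _ : Fin (k + 1) => 1) 0 =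
      (τ * (us - 1)) ^ k * (τ * (r - 1)) ^ (k * k) * Zsing (k + 1) (α ^ 2) y z1 := by
  have h := sixV_boundary (vs := 1) (z2 := 1) hβ hs hβ hs ha hz1 (by linear_combination ha) hd k
  simp only [ite_self] at h
  refine mul_right_cancel₀ (mul_ne_zero (mul_ne_zero hs hβ) (pow_ne_zero k hβ)) (h.trans ?_)
  unfold Zbaradj Zsing
  generalize τ * (us - 1) = A
  generalize τ * (r - 1) = C
  ring

lemma sixV_boundary_col (hβ : τ * (r - 1) ≠ 0) (hv : τ * (r - vs) ≠ 0)
    (ha : r - τ ^ 2 = τ * (r - 1) * α) (hz2 : r - τ ^ 2 * vs = τ * (r - vs) * (α * z2))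
    (hd : (1 - τ ^ 2) ^ 2 * r = (τ * (r - 1)) ^ 2 * y) (k : ℕ) :
    sixV τ (fun _ : Fin (k + 1) => r) (fun j : Fin (k + 1) => if j.val = k then vs else 1) 0 =
      (τ * (r - vs)) ^ k * (τ * (r - 1)) ^ (k * k) * Zsing (k + 1) (α ^ 2) y z2 := by
  have h := sixV_boundary (us := r) (z1 := 1) hβ hβ hv hv ha (by linear_combination ha) hz2 hd k
  simp only [ite_self] at h
  refine mul_right_cancel₀ (mul_ne_zero (mul_ne_zero hβ hv) (pow_ne_zero k hβ)) (h.trans ?_)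
  unfold Zbaradj Zsing
  rw [Zqua_right_eq_top]
  generalize τ * (r - vs) = B
  generalize τ * (r - 1) = C
  ring

lemma sixV_homogeneous (hβ : τ * (r - 1) ≠ 0) (ha : r - τ ^ 2 = τ * (r - 1) * α)
    (hd : (1 - τ ^ 2) ^ 2 * r = (τ * (r - 1)) ^ 2 * y) (m : ℕ) :
    sixV τ (fun _ : Fin m => r) (fun _ : Fin m => 1) 0 * (τ * (r - 1)) ^ m =
      (τ * (r - 1)) ^ (m * m) * Zun m (α ^ 2) y := by
  cases m with
  | zero =>
    have h := part_eq_Zqua 0 α y 1 1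
    unfold Zun
    rw [← h]
    simp [sixV, part]
  | succ k =>
    have h := sixV_boundary_row (us := r) (z1 := 1) hβ hβ ha (by linear_combination ha) hd k
    simp only [ite_self] at h
    rw [h]
    unfold Zsing Zun
    ring

lemma recursion_of_param (hβ : τ * (r - 1) ≠ 0) (hs : τ * (us - 1) ≠ 0) (hv : τ * (r - vs) ≠ 0)
    (hsv : τ * (us - vs) ≠ 0) (hrs : r - us ≠ 0) (hvs : 1 - vs ≠ 0)
    (ha : r - τ ^ 2 = τ * (r - 1) * α)
    (hz1 : us - τ ^ 2 = τ * (us - 1) * (α * z1))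
    (hz2 : r - τ ^ 2 * vs = τ * (r - vs) * (α * z2))
    (hd : (1 - τ ^ 2) ^ 2 * r = (τ * (r - 1)) ^ 2 * y) (n : ℕ) :
    (z1 - 1) * (z2 - 1) * Zbaradj (n + 2) (α ^ 2) y z1 z2 * Zun n (α ^ 2) y =
      y * z1 * z2 * Zbaradj (n + 1) (α ^ 2) y z1 z2 * Zun (n + 1) (α ^ 2) y
      + ((z1 - 1) * (z2 - 1) - y * z1 * z2) *
          Zsing (n + 1) (α ^ 2) y z1 * Zsing (n + 1) (α ^ 2) y z2
      + (z1 - 1) * (z2 - 1) * (α ^ 2 * z1 * z2) ^ (n + 1) *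
          Zun (n + 1) (α ^ 2) y * Zun n (α ^ 2) y := by
  have hbil := sixV_bilinear (n := n) τ (fun i => if i.val = 0 then us else r)
    (fun j => if j.val = n + 1 then vs else 1)
  have hne (j : Fin n) : j.val ≠ n := j.isLt.ne
  have hne' (j : Fin (n + 1)) : j.val ≠ n + 1 := j.isLt.ne
  simp only [Fin.val_succ, Fin.val_castSucc, Fin.val_zero, Fin.val_last, add_left_inj, hne, hne',
    if_true, if_false, Nat.succ_ne_zero, (Nat.succ_ne_zero n).symm] at hbil
  have hbig := sixV_boundary hβ hs hv hsv ha hz1 hz2 hd (n + 1)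
  have hmid := sixV_boundary hβ hs hv hsv ha hz1 hz2 hd n
  have hrow := sixV_boundary_row hβ hs ha hz1 hd n
  have hcol := sixV_boundary_col hβ hv ha hz2 hd n
  have hU := sixV_homogeneous hβ ha hd n
  have hU' := sixV_homogeneous hβ ha hd (n + 1)
  obtain ⟨hτ, hr⟩ := mul_ne_zero_iff.1 hβ
  have hP : τ ^ 2 * ((r - us) * (1 - vs)) =
      τ * (r - 1) * (τ * (us - vs)) - τ * (us - 1) * (τ * (r - vs)) := by ring
  have hQ : τ ^ 2 * ((us - τ ^ 2 * vs) * (us - vs) * ((r - τ ^ 2 * 1) * (r - 1))) =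
      τ * (r - 1) * (τ * (us - vs)) * (τ * (r - 1) * (τ * (us - vs)) -
        τ * (us - 1) * (τ * (r - vs)) +
        τ * (us - 1) * (τ * (r - vs)) * (α ^ 2 * z1 * z2)) := by
    linear_combination τ ^ 2 * (r - 1) * (us - vs) * (τ * (us - 1) * (α * z1) * hz2 +
      (r - τ ^ 2 * vs) * hz1)
  have hX : τ ^ 2 * ((us - τ ^ 2 * 1) * (us - 1) * ((r - τ ^ 2 * vs) * (r - vs))) =
      (τ * (us - 1) * (τ * (r - vs))) ^ 2 * (α ^ 2 * z1 * z2) := by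
    linear_combination τ ^ 2 * (us - 1) * (r - vs) * (τ * (us - 1) * (α * z1) * hz2 +
      (r - τ ^ 2 * vs) * hz1)
  have hy : (z1 - 1) * (z2 - 1) * (τ * (us - 1) * (τ * (r - vs))) * α ^ 2 =
      -((τ * (r - 1) * (τ * (us - vs)) - τ * (us - 1) * (τ * (r - vs))) * y) := by
    have h1 : τ * (us - 1) * (α * (z1 - 1)) * (τ * (r - 1)) = τ * ((r - us) * (1 - τ ^ 2)) := by
      linear_combination τ * (us - 1) * ha - τ * (r - 1) * hz1
    have h2 : τ * (r - vs) * (α * (z2 - 1)) * (τ * (r - 1)) =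
        -(τ * (r * (1 - vs) * (1 - τ ^ 2))) := by
      linear_combination τ * (r - vs) * ha - τ * (r - 1) * hz2
    refine mul_right_cancel₀ (pow_ne_zero 2 hβ) ?_
    linear_combination τ * (us - 1) * (α * (z1 - 1)) * (τ * (r - 1)) * h2 -
      τ * (r * (1 - vs) * (1 - τ ^ 2)) * h1 - τ ^ 2 * (r - us) * (1 - vs) * hd
  have hQ0 : τ * (r - 1) * (τ * (us - vs)) - τ * (us - 1) * (τ * (r - vs)) ≠ 0 := by
    rw [← hP]
    exact mul_ne_zero (pow_ne_zero 2 hτ) (mul_ne_zero hrs hvs)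
  clear ha hz1 hz2 hd
  generalize (us - τ ^ 2 * vs) * (us - vs) * ((r - τ ^ 2 * 1) * (r - 1)) = c₁ at *
  generalize (us - τ ^ 2 * 1) * (us - 1) * ((r - τ ^ 2 * vs) * (r - vs)) = c₂ at *
  generalize (r - us) * (1 - vs) = p at *
  generalize τ * (us - 1) = A at *
  generalize τ * (r - vs) = B at *
  generalize τ * (r - 1) = C at *
  generalize τ * (us - vs) = D at *
  rw [hrow, hcol] at hbil
  clear hrow hcol
  generalize sixV τ _ _ 0 = Z₁ at hbig hbil
  generalize sixV τ _ _ 0 = Z₂ at hmid hbil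
  generalize sixV τ _ _ 0 = Z₃ at hU hbil
  generalize sixV τ _ _ 0 = Z₄ at hU' hbil
  generalize Zbaradj (n + 2) (α ^ 2) y z1 z2 = W₂ at *
  generalize Zbaradj (n + 1) (α ^ 2) y z1 z2 = W₁ at *
  generalize Zsing (n + 1) (α ^ 2) y z1 = S₁ at *
  generalize Zsing (n + 1) (α ^ 2) y z2 = S₂ at *
  generalize Zun n (α ^ 2) y = U at *
  generalize Zun (n + 1) (α ^ 2) y = U' at *
  generalize hX' : α ^ 2 * z1 * z2 = X at hX hQ hmid hbig ⊢
  have key : (C * D - A * B) * (W₂ * U - X ^ (n + 1) * U' * U - S₁ * S₂) =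
      A * B * X * (S₁ * S₂ - U' * W₁) := by
    refine mul_left_cancel₀ (mul_ne_zero (mul_ne_zero (mul_ne_zero hβ hsv) (mul_ne_zero hs hv))
      (mul_ne_zero (pow_ne_zero n (mul_ne_zero hs hv))
        (pow_ne_zero ((n + 1) * (n + 1) + n * n) hβ))) ?_
    linear_combination (τ ^ 2 * (A * B) * C ^ (n + 1) * C ^ n) * hbil -
      (C * D - A * B) * (Z₃ * C ^ n) * hbig - (C * D - A * B) * ((A * B) ^ (n + 1) *
        C ^ ((n + 1) * (n + 1)) * (C * D * W₂ + (A * B - C * D) * X ^ (n + 1) * U')) * hU -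
      (Z₁ * (A * B * C ^ (n + 1))) * (Z₃ * C ^ n) * hP +
      (B ^ n * C ^ (n * n) * S₂ * (A ^ n * C ^ (n * n) * S₁)) * (A * B * C ^ (n + 1) * C ^ n) * hQ -
      (A * B) ^ 2 * X * (Z₂ * (A * B * C ^ n)) * hU' -
      (A * B) ^ 2 * X * (C ^ ((n + 1) * (n + 1)) * U') * hmid -
      (Z₄ * C ^ (n + 1)) * (Z₂ * (A * B * C ^ n)) * hX
  refine mul_left_cancel₀ hQ0 ?_
  linear_combination (z1 - 1) * (z2 - 1) * key + z1 * z2 * (S₁ * S₂ - U' * W₁) * hy +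
    (-(z1 - 1) * (z2 - 1) * A * B * (S₁ * S₂ - U' * W₁)) * hX'

end Refined

lemma recursion_real {x y z1 z2 : ℝ} (hx : 1 < x) (hy : y < 0) (hz1 : z1 < 0) (hz2 : z2 < 0)
    (n : ℕ) :
    (z1 - 1) * (z2 - 1) * Zbaradj (n + 2) x y z1 z2 * Zun n x y =
      y * z1 * z2 * Zbaradj (n + 1) x y z1 z2 * Zun (n + 1) x y
      + ((z1 - 1) * (z2 - 1) - y * z1 * z2) * Zsing (n + 1) x y z1 * Zsing (n + 1) x y z2
      + (z1 - 1) * (z2 - 1) * (x * z1 * z2) ^ (n + 1) * Zun (n + 1) x y * Zun n x y := by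
  obtain ⟨α, hα, rfl⟩ : ∃ α : ℝ, 1 < α ∧ α ^ 2 = x :=
    ⟨√x, Real.lt_sqrt_of_sq_lt (by simpa using hx), Real.sq_sqrt (by linarith)⟩
  obtain ⟨τ, hτα, hτ⟩ : ∃ τ : ℝ, α < τ ∧ α * τ ^ 2 - (α ^ 2 + 1 - y) * τ + α = 0 := by
    have hdisc : (α ^ 2 - 1 + y) ^ 2 < (α ^ 2 + 1 - y) ^ 2 - 4 * α ^ 2 := by nlinarith
    have hsq := Real.sq_sqrt ((sq_nonneg _).trans hdisc.le)
    have hlt := Real.lt_sqrt_of_sq_lt hdisc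
    generalize √((α ^ 2 + 1 - y) ^ 2 - 4 * α ^ 2) = s at hsq hlt
    refine ⟨(α ^ 2 + 1 - y + s) / (2 * α), ?_, ?_⟩
    · rw [lt_div_iff₀ (by linarith)]
      nlinarith
    · field_simp
      linear_combination hsq
  have hα0 : 0 < α := by linarith
  have hτ1 : 1 < τ := by linarith
  have hτ0 : 0 < τ := by linarith
  have hb : 0 < α * τ - 1 := by nlinarith
  have hαz1 : α * z1 < 0 := mul_neg_of_pos_of_neg hα0 hz1
  have hαz2 : α * z2 < 0 := mul_neg_of_pos_of_neg hα0 hz2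
  have hb1 : α * z1 * τ - 1 < 0 := by nlinarith
  have hb2 : α * z2 * τ - 1 < 0 := by nlinarith
  have ha2 : α * z2 - τ < 0 := by linarith
  have hτ2 : 1 - τ ^ 2 < 0 := by nlinarith
  have hyτ : y * τ = (α - τ) * (α * τ - 1) := by linear_combination hτ
  obtain ⟨r, hr⟩ : ∃ r, r = τ * (α - τ) / (α * τ - 1) := ⟨_, rfl⟩
  obtain ⟨us, hus⟩ : ∃ us, us = τ * (α * z1 - τ) / (α * z1 * τ - 1) := ⟨_, rfl⟩
  obtain ⟨vs, hvs⟩ : ∃ vs, vs = r * (α * z2 * τ - 1) / (τ * (α * z2 - τ)) := ⟨_, rfl⟩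
  have hr0 : r < 0 := by
    rw [hr]
    exact div_neg_of_neg_of_pos (mul_neg_of_pos_of_neg hτ0 (by linarith)) hb
  have hus0 : 0 < us := by
    rw [hus]
    exact div_pos_of_neg_of_neg (mul_neg_of_pos_of_neg hτ0 (by linarith)) hb1
  have hvs0 : vs < 0 := by
    rw [hvs]
    exact div_neg_of_pos_of_neg (mul_pos_of_neg_of_neg hr0 hb2) (mul_neg_of_pos_of_neg hτ0 ha2)
  rw [eq_div_iff hb.ne'] at hr
  rw [eq_div_iff hb1.ne] at hus
  rw [eq_div_iff (mul_ne_zero hτ0.ne' ha2.ne)] at hvs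
  have hr1 : (r - 1) * (α * τ - 1) = 1 - τ ^ 2 := by linear_combination hr
  have hus1 : (us - 1) * (α * z1 * τ - 1) = 1 - τ ^ 2 := by linear_combination hus
  have hrvs : (r - vs) * (τ * (α * z2 - τ)) = r * (1 - τ ^ 2) := by linear_combination -hvs
  refine recursion_of_param (τ := τ) (r := r) (us := us) (vs := vs)
    (mul_ne_zero hτ0.ne' (by linarith)) (mul_ne_zero hτ0.ne' ?_) (mul_ne_zero hτ0.ne' ?_)
    (mul_ne_zero hτ0.ne' (by linarith)) (by linarith) (by linarith) ?_ ?_ ?_ ?_ n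
  · exact left_ne_zero_of_mul (hus1.trans_ne hτ2.ne)
  · exact left_ne_zero_of_mul (hrvs.trans_ne (mul_ne_zero hr0.ne hτ2.ne))
  · linear_combination -hr
  · linear_combination -hus
  · linear_combination hvs
  · linear_combination -((r - 1) * (α * τ - 1) + (1 - τ ^ 2)) * r * hr1 +
      (r - 1) ^ 2 * (α * τ - 1) * hr - τ * (r - 1) ^ 2 * hyτ

/-- The difference of the two sides of the recursion. -/
noncomputable def recursionDefect {R : Type*} [CommRing R] (n : ℕ) (x y z1 z2 : R) : R :=
  (z1 - 1) * (z2 - 1) * Zbaradj (n + 2) x y z1 z2 * Zun n x y -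
    (y * z1 * z2 * Zbaradj (n + 1) x y z1 z2 * Zun (n + 1) x y
      + ((z1 - 1) * (z2 - 1) - y * z1 * z2) * Zsing (n + 1) x y z1 * Zsing (n + 1) x y z2
      + (z1 - 1) * (z2 - 1) * (x * z1 * z2) ^ (n + 1) * Zun (n + 1) x y * Zun n x y)

lemma map_recursionDefect {R S : Type*} [CommRing R] [CommRing S] (φ : R →+* S) (n : ℕ)
    (x y z1 z2 : R) :
    φ (recursionDefect n x y z1 z2) = recursionDefect n (φ x) (φ y) (φ z1) (φ z2) := by
  simp only [recursionDefect, Zbaradj, Zsing, Zun, map_sub, map_add, map_mul, map_pow, map_one,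
    map_Zqua]

lemma recursionDefect_X_real (n : ℕ) : recursionDefect n (MvPolynomial.X 0 : MvPolynomial (Fin 4) ℝ)
    (MvPolynomial.X 1) (MvPolynomial.X 2) (MvPolynomial.X 3) = 0 := by
  refine MvPolynomial.funext_set (![Set.Ioi 1, Set.Iio 0, Set.Iio 0, Set.Iio 0]) ?_ fun p hp => ?_
  · simp [Fin.forall_fin_succ, Set.Ioi_infinite, Set.Iio_infinite]
  · simp only [Set.mem_pi, Set.mem_univ, true_imp_iff, Fin.forall_fin_succ] at hp
    obtain ⟨h0, h1, h2, h3, -⟩ := hp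
    rw [map_recursionDefect, map_zero]
    simp only [MvPolynomial.eval_X]
    exact sub_eq_zero.2 (recursion_real h0 h1 h2 h3 n)

lemma recursionDefect_eq_zero {R : Type*} [CommRing R] (n : ℕ) (x y z1 z2 : R) :
    recursionDefect n x y z1 z2 = 0 := by
  have h : recursionDefect n (MvPolynomial.X 0 : MvPolynomial (Fin 4) ℤ)
      (MvPolynomial.X 1) (MvPolynomial.X 2) (MvPolynomial.X 3) = 0 := by
    refine MvPolynomial.map_injective (Int.castRingHom ℝ) Int.cast_injective ?_
    rw [map_recursionDefect, map_zero]
    simpa only [MvPolynomial.map_X] using recursionDefect_X_real n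
  have h' := congrArg (MvPolynomial.eval₂Hom (Int.castRingHom R) ![x, y, z1, z2]) h
  rw [map_recursionDefect, map_zero] at h'
  simpa using h'

/-- Recursion for the alternative adjacent-boundary doubly-refined ASM
generating function (the convention `Z_0(x,y) = 1` holds definitionally:
`Zun 0 x y = 1`), stated for all values of the variables in any commutative
ring, equivalently as an identity of polynomials in `ℤ[x,y,z1,z2]`. -/
theorem stmt3 {R : Type*} [CommRing R] (x y z1 z2 : R) (n : ℕ) (hn : 2 ≤ n) :
    (z1 - 1) * (z2 - 1) * Zbaradj n x y z1 z2 * Zun (n - 2) x y =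
      y * z1 * z2 * Zbaradj (n - 1) x y z1 z2 * Zun (n - 1) x y
      + ((z1 - 1) * (z2 - 1) - y * z1 * z2) *
          Zsing (n - 1) x y z1 * Zsing (n - 1) x y z2
      + (z1 - 1) * (z2 - 1) * (x * z1 * z2) ^ (n - 1) *
          Zun (n - 1) x y * Zun (n - 2) x y := by
  obtain ⟨m, rfl⟩ := Nat.exists_eq_add_of_le' hn
  exact sub_eq_zero.1 (recursionDefect_eq_zero m x y z1 z2)
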